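/- arXiv:2311.11475 — 4 statements merged into one kernel-verified Lean document; each statement's English description precedes it below -/
import Mathlib

section
/- Let ν be a probability measure on ℝ^d that is absolutely continuous with respect to Lebesgue measure and has finite second moment. Then for every smooth compactly supported test function φ : (0,1) × ℝ^d → ℝ, one has ∫_0^1 ∫_{ℝ^d} (∂_t φ(t,x) + ⟨v(t,x), ∇_x φ(t,x)⟩) p_t(x) dx dt = 0; that is, the marginal flow (p_t) satisfies the continuity equation ∂_t p_t + ∇_x·(p_t v) = 0 in the weak (distributional) sense on (0,1) × ℝ^d. -/
/-!
For fixed `y` and `z`, the curve `t ↦ b t • y + a t • z` moves with velocity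
`b' t • y + a' t • z`. Since the gradient of a Gaussian is an explicit multiple of it, the product
`p_t v_t` of the marginal density and the velocity field is the `ν`-average of the Gaussian kernels
times these conditional velocities. Substituting `x = b t • y + a t • z`, with `z` standard
Gaussian, turns the space integral into the expectation of `d/dt φ (t, b t • Y + a t • Z)`. After
exchanging time integral and expectation, the fundamental theorem of calculus concludes, because
`φ` vanishes at both end times. Only the derivative of `φ` along these curves enters, so the density
`p_t` is never differentiated in time.
-/

open MeasureTheory Real Set
open scoped RealInnerProductSpace ENNReal

noncomputable section

section IsotropicGaussian

open ProbabilityTheory Module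

variable {E : Type*} [NormedAddCommGroup E] [InnerProductSpace ℝ E]

/-- The density of the centred Gaussian measure with covariance `σ² • id`, for `σ ≠ 0` and
finite-dimensional `E` (in infinite dimension `finrank ℝ E` is `0`). -/
def isotropicGaussianPDF (σ : ℝ) (x : E) : ℝ :=
  (2 * π * σ ^ 2) ^ (-(finrank ℝ E : ℝ) / 2) * exp (-‖x‖ ^ 2 / (2 * σ ^ 2))

variable {σ : ℝ}

lemma isotropicGaussianPDF_nonneg (x : E) : 0 ≤ isotropicGaussianPDF σ x := by
  unfold isotropicGaussianPDF; positivity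

lemma isotropicGaussianPDF_pos (hσ : σ ≠ 0) (x : E) : 0 < isotropicGaussianPDF σ x := by
  unfold isotropicGaussianPDF; positivity

lemma isotropicGaussianPDF_eq_mul_exp (x : E) :
    isotropicGaussianPDF σ x = isotropicGaussianPDF σ (0 : E) * exp (-‖x‖ ^ 2 / (2 * σ ^ 2)) := by
  simp [isotropicGaussianPDF]

lemma isotropicGaussianPDF_le_zero_apply (x : E) :
    isotropicGaussianPDF σ x ≤ isotropicGaussianPDF σ (0 : E) := by
  rw [isotropicGaussianPDF_eq_mul_exp]
  refine mul_le_of_le_one_right (isotropicGaussianPDF_nonneg _) (exp_le_one_iff.2 ?_)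
  exact div_nonpos_of_nonpos_of_nonneg (neg_nonpos.2 (sq_nonneg _)) (by positivity)

lemma continuous_isotropicGaussianPDF :
    Continuous (isotropicGaussianPDF σ : E → ℝ) := by
  unfold isotropicGaussianPDF; fun_prop

lemma isotropicGaussianPDF_mul_norm_le (hσ : σ ≠ 0) (x : E) :
    isotropicGaussianPDF σ x * ‖x‖ ≤ isotropicGaussianPDF σ (0 : E) * |σ| := by
  have hnorm : ‖x‖ ≤ |σ| * exp (‖x‖ ^ 2 / (2 * σ ^ 2)) := by
    have hexp := add_one_le_exp (‖x‖ ^ 2 / (2 * σ ^ 2))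
    -- AM-GM: `r ≤ |σ| (1 + r² / (2σ²))`
    have hamgm : ‖x‖ ≤ |σ| * (‖x‖ ^ 2 / (2 * σ ^ 2) + 1) := by
      rw [← sq_abs σ]
      have : 0 < |σ| := abs_pos.2 hσ
      field_simp
      nlinarith [sq_nonneg (‖x‖ - |σ|)]
    exact hamgm.trans (by gcongr)
  rw [isotropicGaussianPDF_eq_mul_exp, mul_assoc]
  refine mul_le_mul_of_nonneg_left ?_ (isotropicGaussianPDF_nonneg _)
  rwa [neg_div, exp_neg, inv_mul_le_iff₀ (exp_pos _), mul_comm]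

lemma hasGradientAt_isotropicGaussianPDF [CompleteSpace E] (x : E) :
    HasGradientAt (isotropicGaussianPDF σ : E → ℝ)
      (-(σ ^ 2)⁻¹ • isotropicGaussianPDF σ x • x) x := by
  have hsq : HasFDerivAt (fun z : E => -‖z‖ ^ 2 / (2 * σ ^ 2)) _ x :=
    ((hasFDerivAt_id x).norm_sq.neg.mul_const (2 * σ ^ 2)⁻¹)
  rw [hasGradientAt_iff_hasFDerivAt]
  refine (hsq.exp.const_mul _).congr_fderiv ?_
  ext w
  simp [isotropicGaussianPDF]
  ring

variable [FiniteDimensional ℝ E] [MeasurableSpace E] [BorelSpace E]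

lemma integrable_isotropicGaussianPDF (hσ : σ ≠ 0) :
    Integrable (isotropicGaussianPDF σ : E → ℝ) := by
  refine Integrable.const_mul (.of_integral_ne_zero ?_) _
  have hint := GaussianFourier.integral_rexp_neg_mul_sq_norm (V := E)
    (b := (2 * σ ^ 2)⁻¹) (by positivity)
  simp_rw [neg_div, div_eq_inv_mul, ← neg_mul]
  rw [hint]
  positivity

lemma charFun_withDensity_isotropicGaussianPDF (hσ : σ ≠ 0) (t : E) :
    charFun (volume.withDensity fun x : E => ENNReal.ofReal (isotropicGaussianPDF σ x)) t
      = Complex.exp (-‖σ • t‖ ^ 2 / 2) := by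
  have hFourier := GaussianFourier.integral_cexp_neg_mul_sq_norm_add (V := E)
    (b := ((2 * σ ^ 2)⁻¹ : ℝ)) (by rw [Complex.ofReal_re]; positivity) Complex.I t
  have hnormalization :
      (((2 * π * σ ^ 2) ^ (-(finrank ℝ E : ℝ) / 2) : ℝ) : ℂ)
        * (π / ((2 * σ ^ 2)⁻¹ : ℝ)) ^ (finrank ℝ E / 2 : ℂ) = 1 := by
    have hbase : (0 : ℝ) < 2 * π * σ ^ 2 := by positivity
    rw [show (π / ((2 * σ ^ 2)⁻¹ : ℝ) : ℂ) = (2 * π * σ ^ 2 : ℝ) by push_cast; field_simp,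
      show (finrank ℝ E / 2 : ℂ) = ((finrank ℝ E / 2 : ℝ) : ℂ) by push_cast; rfl,
      ← Complex.ofReal_cpow hbase.le, ← Complex.ofReal_mul, ← rpow_add hbase, neg_div,
      neg_add_cancel, rpow_zero, Complex.ofReal_one]
  calc charFun (volume.withDensity fun x : E => ENNReal.ofReal (isotropicGaussianPDF σ x)) t
      = ∫ x : E, isotropicGaussianPDF σ x • Complex.exp (⟪x, t⟫ * Complex.I) := by
        rw [charFun_apply, integral_withDensity_eq_integral_toReal_smul
          continuous_isotropicGaussianPDF.measurable.ennreal_ofReal (by simp)]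
        simp_rw [ENNReal.toReal_ofReal (isotropicGaussianPDF_nonneg _)]
    _ = ((2 * π * σ ^ 2) ^ (-(finrank ℝ E : ℝ) / 2) : ℝ) * ∫ x : E,
          Complex.exp (-((2 * σ ^ 2)⁻¹ : ℝ) * ‖x‖ ^ 2 + Complex.I * ⟪t, x⟫) := by
        rw [← integral_const_mul]
        congr 1 with x
        rw [isotropicGaussianPDF, Complex.real_smul, Complex.exp_add, real_inner_comm x t]
        push_cast
        ring_nf
    _ = Complex.exp (Complex.I ^ 2 * ‖t‖ ^ 2 / (4 * ((2 * σ ^ 2)⁻¹ : ℝ))) := by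
        rw [hFourier, ← mul_assoc, hnormalization, one_mul]
    _ = Complex.exp (-‖σ • t‖ ^ 2 / 2) := by
        rw [norm_smul, Complex.ofReal_mul, mul_pow, ← Complex.ofReal_pow ‖σ‖, norm_eq_abs, sq_abs,
          Complex.I_sq]
        congr 1
        push_cast
        field_simp
        ring

lemma stdGaussian_map_smul (hσ : σ ≠ 0) :
    (stdGaussian E).map (fun z => σ • z)
      = volume.withDensity fun x : E => ENNReal.ofReal (isotropicGaussianPDF σ x) := by
  have := isFiniteMeasure_withDensity_ofReal (integrable_isotropicGaussianPDF (E := E) hσ).2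
  refine Measure.ext_of_charFun (funext fun t => ?_)
  rw [charFun_map_smul, charFun_stdGaussian, charFun_withDensity_isotropicGaussianPDF hσ]

variable {F : Type*} [NormedAddCommGroup F] [NormedSpace ℝ F]

lemma integrable_isotropicGaussianPDF_sub_smul_iff (hσ : σ ≠ 0) (m : E) (f : E → F) :
    Integrable (fun x => isotropicGaussianPDF σ (x - m) • f x)
      ↔ Integrable (fun z => f (m + σ • z)) (stdGaussian E) := by
  calc Integrable (fun x => isotropicGaussianPDF σ (x - m) • f x)
    _ ↔ Integrable (fun x => isotropicGaussianPDF σ x • f (m + x)) := by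
        rw [← (measurePreserving_add_left volume m).integrable_comp_emb
          (measurableEmbedding_addLeft m)]
        simp only [Function.comp_def, add_sub_cancel_left]
    _ ↔ Integrable (fun x => f (m + x)) ((stdGaussian E).map fun z => σ • z) := by
        rw [stdGaussian_map_smul hσ, integrable_withDensity_iff_integrable_smul'
          continuous_isotropicGaussianPDF.measurable.ennreal_ofReal (by simp)]
        simp_rw [ENNReal.toReal_ofReal (isotropicGaussianPDF_nonneg _)]
    _ ↔ Integrable (fun z => f (m + σ • z)) (stdGaussian E) :=
        (Homeomorph.smulOfNeZero σ hσ).measurableEmbedding.integrable_map_iff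

lemma integral_isotropicGaussianPDF_sub_smul (hσ : σ ≠ 0) (m : E) (f : E → F) :
    ∫ x, isotropicGaussianPDF σ (x - m) • f x = ∫ z, f (m + σ • z) ∂stdGaussian E := by
  calc ∫ x, isotropicGaussianPDF σ (x - m) • f x
      = ∫ x, isotropicGaussianPDF σ x • f (m + x) := by
        simpa using (integral_add_left_eq_self
          (fun x => isotropicGaussianPDF σ (x - m) • f x) m).symm
    _ = ∫ x, f (m + x) ∂(stdGaussian E).map (fun z => σ • z) := by
        rw [stdGaussian_map_smul hσ, integral_withDensity_eq_integral_toReal_smul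
          continuous_isotropicGaussianPDF.measurable.ennreal_ofReal (by simp)]
        simp_rw [ENNReal.toReal_ofReal (isotropicGaussianPDF_nonneg _)]
    _ = ∫ z, f (m + σ • z) ∂stdGaussian E :=
        (Homeomorph.smulOfNeZero σ hσ).measurableEmbedding.integral_map _

end IsotropicGaussian

section GradientOfIntegral

open Filter Topology

variable {E α : Type*} [NormedAddCommGroup E] [InnerProductSpace ℝ E] [CompleteSpace E]
  [MeasurableSpace α] {μ : Measure α} {f : E → α → ℝ} {g : E → α → E} {bound : α → ℝ} {x : E}

lemma hasGradientAt_integral_of_dominated {s : Set E} (hs : s ∈ 𝓝 x)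
    (hf_meas : ∀ᶠ z in 𝓝 x, AEStronglyMeasurable (f z) μ) (hf_int : Integrable (f x) μ)
    (hg_int : Integrable (g x) μ) (h_bound : ∀ᵐ a ∂μ, ∀ z ∈ s, ‖g z a‖ ≤ bound a)
    (bound_integrable : Integrable bound μ)
    (h_grad : ∀ᵐ a ∂μ, ∀ z ∈ s, HasGradientAt (f · a) (g z a) z) :
    HasGradientAt (fun z => ∫ a, f z a ∂μ) (∫ a, g x a ∂μ) x := by
  have hdual_int : Integrable (fun a => InnerProductSpace.toDual ℝ E (g x a)) μ :=
    (InnerProductSpace.toDual ℝ E).integrable_comp_iff.2 hg_int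
  rw [hasGradientAt_iff_hasFDerivAt]
  refine (hasFDerivAt_integral_of_dominated_of_fderiv_le
    (F' := fun z a => InnerProductSpace.toDual ℝ E (g z a)) hs hf_meas hf_int
    hdual_int.aestronglyMeasurable (by simpa using h_bound) bound_integrable
    (h_grad.mono fun a ha z hz => (ha z hz).hasFDerivAt)).congr_fderiv ?_
  ext w
  rw [ContinuousLinearMap.integral_apply hdual_int]
  simp_rw [InnerProductSpace.toDual_apply_apply, real_inner_comm w]
  exact (integral_inner hg_int w)

end GradientOfIntegral

section GaussianMixture

variable {E : Type*} [NormedAddCommGroup E] [InnerProductSpace ℝ E]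
  [MeasurableSpace E] [BorelSpace E]

/-- The density of `β • Y + σ • Z` for independent `Y ∼ ν` and `Z` standard Gaussian, when
`σ ≠ 0`. -/
def gaussianMixturePDF (ν : Measure E) (β σ : ℝ) (x : E) : ℝ :=
  ∫ y, isotropicGaussianPDF σ (x - β • y) ∂ν

variable {ν : Measure E} [IsFiniteMeasure ν] {β σ : ℝ}

lemma integrable_isotropicGaussianPDF_sub_smul (x : E) :
    Integrable (fun y => isotropicGaussianPDF σ (x - β • y)) ν := by
  refine .of_bound (continuous_isotropicGaussianPDF.comp (by fun_prop)).aestronglyMeasurable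
    (isotropicGaussianPDF σ (0 : E)) (.of_forall fun y => ?_)
  rw [norm_of_nonneg (isotropicGaussianPDF_nonneg _)]
  exact isotropicGaussianPDF_le_zero_apply _

lemma gaussianMixturePDF_pos [NeZero ν] (hσ : σ ≠ 0) (x : E) : 0 < gaussianMixturePDF ν β σ x := by
  refine (integral_pos_iff_support_of_nonneg (fun y => isotropicGaussianPDF_nonneg _)
    (integrable_isotropicGaussianPDF_sub_smul x)).2 ?_
  rw [Function.support_eq_univ fun y => (isotropicGaussianPDF_pos hσ (x - β • y)).ne']
  simp [pos_iff_ne_zero, NeZero.ne ν]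

variable [SecondCountableTopology E]

lemma integrable_isotropicGaussianPDF_sub_smul_smul (hσ : σ ≠ 0) (x : E) :
    Integrable (fun y => isotropicGaussianPDF σ (x - β • y) • (x - β • y)) ν := by
  refine .of_bound (Continuous.aestronglyMeasurable ?_)
    (isotropicGaussianPDF σ (0 : E) * |σ|) (.of_forall fun y => ?_)
  · exact (continuous_isotropicGaussianPDF.comp (by fun_prop)).smul (by fun_prop)
  · rw [norm_smul, norm_of_nonneg (isotropicGaussianPDF_nonneg _)]
    exact isotropicGaussianPDF_mul_norm_le hσ _

variable [CompleteSpace E]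

lemma hasGradientAt_gaussianMixturePDF (hσ : σ ≠ 0) (x : E) :
    HasGradientAt (gaussianMixturePDF ν β σ)
      (-(σ ^ 2)⁻¹ • ∫ y, isotropicGaussianPDF σ (x - β • y) • (x - β • y) ∂ν) x := by
  rw [← integral_smul]
  refine hasGradientAt_integral_of_dominated
    (g := fun z y => -(σ ^ 2)⁻¹ • isotropicGaussianPDF σ (z - β • y) • (z - β • y))
    (bound := fun _ => (σ ^ 2)⁻¹ * (isotropicGaussianPDF σ (0 : E) * |σ|)) Filter.univ_mem
    (.of_forall fun z => (integrable_isotropicGaussianPDF_sub_smul z).aestronglyMeasurable)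
    (integrable_isotropicGaussianPDF_sub_smul x)
    ((integrable_isotropicGaussianPDF_sub_smul_smul hσ x).smul _)
    (.of_forall fun y z _ => ?_) (integrable_const _) (.of_forall fun y z _ => ?_)
  · rw [norm_smul, norm_smul, norm_neg, norm_inv, norm_of_nonneg (sq_nonneg σ),
      norm_of_nonneg (isotropicGaussianPDF_nonneg _)]
    exact mul_le_mul_of_nonneg_left (isotropicGaussianPDF_mul_norm_le hσ _) (by positivity)
  · rw [hasGradientAt_iff_hasFDerivAt, hasFDerivAt_comp_sub]
    exact (hasGradientAt_isotropicGaussianPDF (z - β • y)).hasFDerivAt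

lemma gaussianMixturePDF_smul_gradient_log (hσ : σ ≠ 0) (x : E) :
    gaussianMixturePDF ν β σ x • gradient (fun z => log (gaussianMixturePDF ν β σ z)) x
      = -(σ ^ 2)⁻¹ • ∫ y, isotropicGaussianPDF σ (x - β • y) • (x - β • y) ∂ν := by
  obtain rfl | _ := eq_zero_or_neZero ν
  · simp [gaussianMixturePDF]
  set p : E → ℝ := gaussianMixturePDF ν β σ
  set grad : E := -(σ ^ 2)⁻¹ • ∫ y, isotropicGaussianPDF σ (x - β • y) • (x - β • y) ∂ν
  have hpos : p x ≠ 0 := (gaussianMixturePDF_pos hσ x).ne'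
  have hlog : HasGradientAt (fun z => log (p z)) ((p x)⁻¹ • grad) x := by
    rw [hasGradientAt_iff_hasFDerivAt, map_smulₛₗ]
    exact (hasGradientAt_gaussianMixturePDF hσ x).hasFDerivAt.log hpos
  rw [hlog.gradient, smul_inv_smul₀ hpos]

end GaussianMixture

section ConditionalVelocity

variable {E : Type*} [NormedAddCommGroup E] [InnerProductSpace ℝ E] {β σ β' σ' : ℝ}

/-- The velocity at `x` of the curve `β • y + σ • z` with `y` and `z` fixed, when `β` and `σ` have
derivatives `β'` and `σ'`. -/
def conditionalVelocity (β σ β' σ' : ℝ) (y x : E) : E :=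
  β' • y + (σ' / σ) • (x - β • y)

lemma conditionalVelocity_add_smul (hσ : σ ≠ 0) (y z : E) :
    conditionalVelocity β σ β' σ' y (β • y + σ • z) = β' • y + σ' • z := by
  rw [conditionalVelocity, add_sub_cancel_left, smul_smul, div_mul_cancel₀ _ hσ]

lemma isotropicGaussianPDF_smul_conditionalVelocity (hσ : σ ≠ 0) (hβ : β ≠ 0) (y x : E) :
    isotropicGaussianPDF σ (x - β • y) • conditionalVelocity β σ β' σ' y x
      = isotropicGaussianPDF σ (x - β • y) • (β' / β) • x
        + (σ' / σ - β' / β) • isotropicGaussianPDF σ (x - β • y) • (x - β • y) := by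
  rw [conditionalVelocity]
  match_scalars <;> field_simp <;> ring

end ConditionalVelocity

section MarginalVelocity

variable {E F : Type*} [NormedAddCommGroup E] [InnerProductSpace ℝ E]
  [SecondCountableTopology E] [MeasurableSpace E] [BorelSpace E]
  [NormedAddCommGroup F] [NormedSpace ℝ F] [CompleteSpace F]
  {ν : Measure E} [IsFiniteMeasure ν] {β σ β' σ' : ℝ}

lemma integrable_isotropicGaussianPDF_smul_conditionalVelocity (hσ : σ ≠ 0) (hβ : β ≠ 0) (x : E) :
    Integrable (fun y => isotropicGaussianPDF σ (x - β • y) • conditionalVelocity β σ β' σ' y x)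
      ν := by
  simp_rw [isotropicGaussianPDF_smul_conditionalVelocity hσ hβ]
  exact ((integrable_isotropicGaussianPDF_sub_smul x).smul_const _).add
    ((integrable_isotropicGaussianPDF_sub_smul_smul hσ x).smul _)

variable [CompleteSpace E]

/-- The velocity field transporting `gaussianMixturePDF ν β σ` when `β` and `σ` have derivatives
`β'` and `σ'`, written in terms of the score. -/
def marginalVelocity (ν : Measure E) (β σ β' σ' : ℝ) (x : E) : E :=
  (β' / β) • x
    + (β' / β * σ ^ 2 - σ' * σ) • gradient (fun z => log (gaussianMixturePDF ν β σ z)) x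

lemma integral_isotropicGaussianPDF_smul_conditionalVelocity (hσ : σ ≠ 0) (hβ : β ≠ 0) (x : E) :
    ∫ y, isotropicGaussianPDF σ (x - β • y) • conditionalVelocity β σ β' σ' y x ∂ν
      = gaussianMixturePDF ν β σ x • marginalVelocity ν β σ β' σ' x := by
  calc ∫ y, isotropicGaussianPDF σ (x - β • y) • conditionalVelocity β σ β' σ' y x ∂ν
      = gaussianMixturePDF ν β σ x • (β' / β) • x + (σ' / σ - β' / β) •
          ∫ y, isotropicGaussianPDF σ (x - β • y) • (x - β • y) ∂ν := by
        rw [gaussianMixturePDF, ← integral_smul_const, ← integral_smul]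
        simp_rw [isotropicGaussianPDF_smul_conditionalVelocity hσ hβ]
        exact integral_add ((integrable_isotropicGaussianPDF_sub_smul x).smul_const _)
          ((integrable_isotropicGaussianPDF_sub_smul_smul hσ x).smul _)
    _ = gaussianMixturePDF ν β σ x • marginalVelocity ν β σ β' σ' x := by
        rw [marginalVelocity, smul_add, smul_comm (gaussianMixturePDF ν β σ x) (β' / β * σ ^ 2 - _),
          gaussianMixturePDF_smul_gradient_log hσ, smul_smul _ (-(σ ^ 2)⁻¹)]
        congr 2
        field_simp
        ring

lemma gaussianMixturePDF_smul_apply_marginalVelocity (hσ : σ ≠ 0) (hβ : β ≠ 0)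
    (L : ℝ × E →L[ℝ] F) (x : E) :
    gaussianMixturePDF ν β σ x • L (1, marginalVelocity ν β σ β' σ' x)
      = ∫ y, isotropicGaussianPDF σ (x - β • y) • L (1, conditionalVelocity β σ β' σ' y x) ∂ν := by
  have hmass := integrable_isotropicGaussianPDF_sub_smul (ν := ν) (β := β) (σ := σ) x
  have hflux := integrable_isotropicGaussianPDF_smul_conditionalVelocity
    (ν := ν) (β' := β') (σ' := σ') hσ hβ x
  simp_rw [← map_smul, Prod.smul_mk, smul_eq_mul, mul_one]
  rw [L.integral_comp_comm (hmass.prodMk hflux), integral_pair hmass hflux,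
    integral_isotropicGaussianPDF_smul_conditionalVelocity hσ hβ, ← gaussianMixturePDF]

end MarginalVelocity

section GaussianFubini

open ProbabilityTheory

variable {E F α : Type*} [NormedAddCommGroup E] [InnerProductSpace ℝ E] [FiniteDimensional ℝ E]
  [MeasurableSpace E] [BorelSpace E] [NormedAddCommGroup F] [NormedSpace ℝ F]
  [MeasurableSpace α] {ν : Measure α} {σ : ℝ} {m : α → E} {f : E → α → F}

lemma integrable_isotropicGaussianPDF_sub_smul_prod (hσ : σ ≠ 0) (hm : Measurable m)
    (hf : StronglyMeasurable f.uncurry)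
    (hint : Integrable (fun q : α × E => f (m q.1 + σ • q.2) q.1) (ν.prod (stdGaussian E))) :
    Integrable (fun q : α × E => isotropicGaussianPDF σ (q.2 - m q.1) • f q.2 q.1)
      (ν.prod volume) := by
  have hmeas : StronglyMeasurable fun q : α × E =>
      isotropicGaussianPDF σ (q.2 - m q.1) • f q.2 q.1 :=
    (continuous_isotropicGaussianPDF.measurable.comp (by fun_prop)).stronglyMeasurable.smul
      (hf.comp_measurable measurable_swap)
  rw [integrable_prod_iff hmeas.aestronglyMeasurable]
  obtain ⟨hsection, hnorm⟩ := (integrable_prod_iff hint.1).1 hint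
  refine ⟨hsection.mono fun y => (integrable_isotropicGaussianPDF_sub_smul_iff hσ (m y) (f · y)).2,
    hnorm.congr (.of_forall fun y => ?_)⟩
  simp_rw [norm_smul, norm_of_nonneg (isotropicGaussianPDF_nonneg _)]
  exact (integral_isotropicGaussianPDF_sub_smul hσ (m y) (‖f · y‖)).symm

lemma integral_integral_isotropicGaussianPDF_sub_smul [SFinite ν] (hσ : σ ≠ 0) (hm : Measurable m)
    (hf : StronglyMeasurable f.uncurry)
    (hint : Integrable (fun q : α × E => f (m q.1 + σ • q.2) q.1) (ν.prod (stdGaussian E))) :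
    ∫ x, ∫ y, isotropicGaussianPDF σ (x - m y) • f x y ∂ν
      = ∫ q : α × E, f (m q.1 + σ • q.2) q.1 ∂ν.prod (stdGaussian E) := by
  rw [← integral_integral_swap (integrable_isotropicGaussianPDF_sub_smul_prod hσ hm hf hint),
    integral_prod _ hint]
  congr 1 with y
  exact integral_isotropicGaussianPDF_sub_smul hσ (m y) (f · y)

end GaussianFubini

section TransportAlongCurves

open Filter Topology

variable {E F Ω : Type*} [NormedAddCommGroup E] [NormedSpace ℝ E]
  [NormedAddCommGroup F] [NormedSpace ℝ F] [MeasurableSpace Ω] {μ : Measure Ω}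

lemma integrable_fderiv_apply {φ : E → F} (hφ : ContDiff ℝ 1 φ) (hsupp : HasCompactSupport φ)
    {X W : Ω → E} (hX : AEStronglyMeasurable X μ) (hW : Integrable W μ) :
    Integrable (fun ω => fderiv ℝ φ (X ω) (W ω)) μ := by
  have hcont : Continuous (fderiv ℝ φ) := hφ.continuous_fderiv one_ne_zero
  obtain ⟨K, hK⟩ := hcont.bounded_above_of_compact_support (hsupp.fderiv ℝ)
  refine (hW.norm.const_mul K).mono' ?_ (.of_forall fun ω => ?_)
  · exact isBoundedBilinearMap_apply.continuous.comp_aestronglyMeasurable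
      ((hcont.comp_aestronglyMeasurable hX).prodMk hW.1)
  · exact (fderiv ℝ φ (X ω)).le_of_opNorm_le (hK _) _

variable {φ : ℝ × E → F} {a b : ℝ}

lemma tendsto_comp_graph_of_eq_zero {t₀ : ℝ} (hφ : ContDiff ℝ 1 φ) (hsupp : HasCompactSupport φ)
    (hzero : ∀ x, φ (t₀, x) = 0) (x : ℝ → E) :
    Tendsto (fun t => φ (t, x t)) (𝓝 t₀) (𝓝 0) := by
  obtain ⟨K, hK⟩ := hφ.lipschitzWith_of_hasCompactSupport hsupp one_ne_zero
  refine squeeze_zero_norm (a := fun t => K * dist t t₀) (fun t => ?_) ?_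
  · simpa [hzero, Prod.dist_eq] using hK.dist_le_mul (t, x t) (t₀, x t)
  · exact Continuous.tendsto' (by fun_prop) _ _ (by simp)

variable [CompleteSpace F]

lemma setIntegral_fderiv_graph_eq_zero (hφ : ContDiff ℝ 1 φ) (hsupp : HasCompactSupport φ)
    (hzero : ∀ t ∉ Ioo a b, ∀ x, φ (t, x) = 0) {x x' : ℝ → E}
    (hx : ∀ t ∈ Ioo a b, HasDerivAt x (x' t) t)
    (hint : IntegrableOn (fun t => fderiv ℝ φ (t, x t) (1, x' t)) (Ioo a b)) :
    ∫ t in Ioo a b, fderiv ℝ φ (t, x t) (1, x' t) = 0 := by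
  obtain hab | hab := le_or_gt b a
  · simp [hab]
  have hderiv (t) (ht : t ∈ Ioo a b) :
      HasDerivAt (fun t => φ (t, x t)) (fderiv ℝ φ (t, x t) (1, x' t)) t :=
    (hφ.differentiable one_ne_zero _).hasFDerivAt.comp_hasDerivAt t
      ((hasDerivAt_id t).prodMk (hx t ht))
  have hboundary (t₀) (ht₀ : t₀ ∉ Ioo a b) : Tendsto (fun t => φ (t, x t)) (𝓝 t₀) (𝓝 0) :=
    tendsto_comp_graph_of_eq_zero hφ hsupp (hzero t₀ ht₀) x
  rw [← integral_Ioc_eq_integral_Ioo, ← intervalIntegral.integral_of_le hab.le,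
    intervalIntegral.integral_eq_sub_of_hasDerivAt_of_tendsto hab hderiv
      ((intervalIntegrable_iff_integrableOn_Ioo_of_le hab.le).2 hint)
      ((hboundary a (by simp)).mono_left nhdsWithin_le_nhds)
      ((hboundary b (by simp)).mono_left nhdsWithin_le_nhds), sub_zero]

lemma setIntegral_integral_fderiv_graph_eq_zero [IsFiniteMeasure μ] (hφ : ContDiff ℝ 1 φ)
    (hsupp : HasCompactSupport φ) (hzero : ∀ t ∉ Ioo a b, ∀ x, φ (t, x) = 0) {X X' : ℝ → Ω → E}
    (hX : ∀ t ∈ Ioo a b, ∀ ω, HasDerivAt (X · ω) (X' t ω) t)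
    (hX_meas : AEStronglyMeasurable X.uncurry ((volume.restrict (Ioo a b)).prod μ))
    (hX'_int : Integrable X'.uncurry ((volume.restrict (Ioo a b)).prod μ)) :
    ∫ t in Ioo a b, ∫ ω, fderiv ℝ φ (t, X t ω) (1, X' t ω) ∂μ = 0 := by
  have hint : Integrable (fun r : ℝ × Ω => fderiv ℝ φ (r.1, X r.1 r.2) (1, X' r.1 r.2))
      ((volume.restrict (Ioo a b)).prod μ) :=
    integrable_fderiv_apply hφ hsupp (measurable_fst.aestronglyMeasurable.prodMk hX_meas)
      ((integrable_const (1 : ℝ)).prodMk hX'_int)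
  rw [integral_integral_swap hint]
  refine integral_eq_zero_of_ae (hint.prod_left_ae.mono fun ω hω => ?_)
  exact setIntegral_fderiv_graph_eq_zero hφ hsupp hzero (fun t ht => hX t ht ω) hω

lemma setIntegral_integral_fderiv_interpolation_eq_zero [IsFiniteMeasure μ] (hφ : ContDiff ℝ 1 φ)
    (hsupp : HasCompactSupport φ) (hzero : ∀ t ∉ Ioo a b, ∀ x, φ (t, x) = 0) {f g f' g' : ℝ → ℝ}
    (hf : ∀ t ∈ Ioo a b, HasDerivAt f (f' t) t) (hg : ∀ t ∈ Ioo a b, HasDerivAt g (g' t) t)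
    (hf' : IntegrableOn f' (Ioo a b)) (hg' : IntegrableOn g' (Ioo a b)) {Y Z : Ω → E}
    (hY : Integrable Y μ) (hZ : Integrable Z μ) :
    ∫ t in Ioo a b, ∫ ω, fderiv ℝ φ (t, f t • Y ω + g t • Z ω) (1, f' t • Y ω + g' t • Z ω) ∂μ
      = 0 := by
  have hmeas {h h' : ℝ → ℝ} {U : Ω → E} (hh : ∀ t ∈ Ioo a b, HasDerivAt h (h' t) t)
      (hU : Integrable U μ) : AEStronglyMeasurable (fun r : ℝ × Ω => h r.1 • U r.2)
        ((volume.restrict (Ioo a b)).prod μ) :=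
    have hh_cont : ContinuousOn h (Ioo a b) := HasDerivAt.continuousOn hh
    (hh_cont.aestronglyMeasurable measurableSet_Ioo).comp_fst.smul hU.1.comp_snd
  exact setIntegral_integral_fderiv_graph_eq_zero hφ hsupp hzero
    (X := fun t ω => f t • Y ω + g t • Z ω) (X' := fun t ω => f' t • Y ω + g' t • Z ω)
    (fun t ht ω => ((hf t ht).smul_const _).add ((hg t ht).smul_const _))
    ((hmeas hf hY).add (hmeas hg hZ)) ((hf'.smul_prod hY).add (hg'.smul_prod hZ))

end TransportAlongCurves
section InterpolationCoefficients

lemma nonneg_on_Icc_of_nonneg_on_Ioo {α M : Type*} [PartialOrder α] [Preorder M] [Zero M]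
    {f : α → M} {a b : α} (ha : 0 ≤ f a) (hb : 0 ≤ f b) (hf : ∀ t ∈ Ioo a b, 0 ≤ f t) :
    ∀ t ∈ Icc a b, 0 ≤ f t := by
  rintro t ⟨hat, htb⟩
  obtain rfl | hat := hat.eq_or_lt
  · exact ha
  obtain rfl | htb := htb.eq_or_lt
  exacts [hb, hf t ⟨hat, htb⟩]

lemma continuousOn_of_sq_of_nonneg {X : Type*} [TopologicalSpace X] {f : X → ℝ} {s : Set X}
    (hsq : ContinuousOn (fun x => f x ^ 2) s) (hnonneg : ∀ x ∈ s, 0 ≤ f x) : ContinuousOn f s :=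
  hsq.sqrt.congr fun x hx => (sqrt_sq (hnonneg x hx)).symm

lemma integrableOn_Ioo_deriv_of_nonneg {f f' : ℝ → ℝ} {a b : ℝ} (hcont : ContinuousOn f (Icc a b))
    (hderiv : ∀ t ∈ Ioo a b, HasDerivAt f (f' t) t) (hf' : ∀ t ∈ Ioo a b, 0 ≤ f' t) :
    IntegrableOn f' (Ioo a b) :=
  (intervalIntegral.integrableOn_deriv_of_nonneg hcont hderiv hf').mono_set Ioo_subset_Ioc_self

lemma integrableOn_Ioo_deriv_of_nonpos {f f' : ℝ → ℝ} {a b : ℝ} (hcont : ContinuousOn f (Icc a b))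
    (hderiv : ∀ t ∈ Ioo a b, HasDerivAt f (f' t) t) (hf' : ∀ t ∈ Ioo a b, f' t ≤ 0) :
    IntegrableOn f' (Ioo a b) :=
  integrable_neg_iff.1 <| integrableOn_Ioo_deriv_of_nonneg hcont.neg
    (fun t ht => (hderiv t ht).neg) fun t ht => neg_nonneg.2 (hf' t ht)

lemma hasDerivAt_deriv_of_contDiffOn_Ico {f : ℝ → ℝ} {n : WithTop ℕ∞} (hn : n ≠ 0) {a b t : ℝ}
    (hf : ContDiffOn ℝ n f (Ico a b)) (ht : t ∈ Ioo a b) : HasDerivAt f (deriv f t) t :=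
  ((hf.contDiffAt (Ico_mem_nhds ht.1 ht.2)).differentiableAt hn).hasDerivAt

end InterpolationCoefficients

lemma integrable_id_of_integrable_sq_norm {E : Type*} [NormedAddCommGroup E] [MeasurableSpace E]
    [BorelSpace E] [SecondCountableTopology E] {ν : Measure E} [IsFiniteMeasure ν]
    (hν : Integrable (fun y => ‖y‖ ^ 2) ν) : Integrable id ν :=
  ((memLp_two_iff_integrable_sq_norm aestronglyMeasurable_id).2 hν).integrable one_le_two

section WeakContinuityEquation

open ProbabilityTheory

variable {E : Type*} [NormedAddCommGroup E] [InnerProductSpace ℝ E]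

lemma deriv_add_inner_gradient_eq_fderiv [CompleteSpace E] {φ : ℝ × E → ℝ} {t : ℝ} {x : E}
    (hφ : DifferentiableAt ℝ φ (t, x)) (w : E) :
    deriv (fun u => φ (u, x)) t + ⟪w, gradient (fun z => φ (t, z)) x⟫
      = fderiv ℝ φ (t, x) (1, w) := by
  have htime : HasDerivAt (fun u => φ (u, x)) (fderiv ℝ φ (t, x) (1, 0)) t :=
    hφ.hasFDerivAt.comp_hasDerivAt t ((hasDerivAt_id t).prodMk (hasDerivAt_const t x))
  have hspace : HasFDerivAt (fun z => φ (t, z))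
      ((fderiv ℝ φ (t, x)).comp (ContinuousLinearMap.inr ℝ ℝ E)) x :=
    hφ.hasFDerivAt.comp x (hasFDerivAt_prodMk_right t x)
  rw [htime.deriv, real_inner_comm, inner_gradient_left, hspace.fderiv,
    ContinuousLinearMap.comp_apply, ContinuousLinearMap.inr_apply, ← map_add]
  simp

variable [FiniteDimensional ℝ E] [MeasurableSpace E] [BorelSpace E]

lemma integral_gaussianMixturePDF_smul_apply_marginalVelocity {F : Type*} [NormedAddCommGroup F]
    [NormedSpace ℝ F] [CompleteSpace F] {ν : Measure E} [IsFiniteMeasure ν] {β σ β' σ' : ℝ}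
    (hσ : σ ≠ 0) (hβ : β ≠ 0) {A : E → ℝ × E →L[ℝ] F} (hA : Continuous A)
    (hint : Integrable (fun q : E × E => A (β • q.1 + σ • q.2) (1, β' • q.1 + σ' • q.2))
      (ν.prod (stdGaussian E))) :
    ∫ x, gaussianMixturePDF ν β σ x • A x (1, marginalVelocity ν β σ β' σ' x)
      = ∫ q : E × E, A (β • q.1 + σ • q.2) (1, β' • q.1 + σ' • q.2) ∂ν.prod (stdGaussian E) := by
  have hfield : Continuous fun r : E × E => A r.1 (1, conditionalVelocity β σ β' σ' r.2 r.1) := by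
    unfold conditionalVelocity; fun_prop
  simp_rw [gaussianMixturePDF_smul_apply_marginalVelocity hσ hβ]
  simp_rw [← conditionalVelocity_add_smul (β := β) (β' := β') (σ' := σ') hσ] at hint ⊢
  exact integral_integral_isotropicGaussianPDF_sub_smul hσ (m := (β • ·))
    (f := fun x y => A x (1, conditionalVelocity β σ β' σ' y x)) (by fun_prop)
    hfield.stronglyMeasurable hint

variable {ν : Measure E} [IsFiniteMeasure ν] {φ : ℝ × E → ℝ}

lemma integral_deriv_add_inner_marginalVelocity_mul_gaussianMixturePDF (hν : Integrable id ν)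
    {t β σ : ℝ} (hσ : σ ≠ 0) (hβ : β ≠ 0) (β' σ' : ℝ) (hφ : ContDiff ℝ 1 φ)
    (hsupp : HasCompactSupport φ) :
    ∫ x, (deriv (fun u => φ (u, x)) t
        + ⟪marginalVelocity ν β σ β' σ' x, gradient (fun z => φ (t, z)) x⟫)
        * gaussianMixturePDF ν β σ x
      = ∫ q : E × E, fderiv ℝ φ (t, β • q.1 + σ • q.2) (1, β' • q.1 + σ' • q.2)
          ∂ν.prod (stdGaussian E) := by
  simp_rw [deriv_add_inner_gradient_eq_fderiv (hφ.differentiable one_ne_zero _),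
    mul_comm _ (gaussianMixturePDF _ _ _ _), ← smul_eq_mul]
  refine integral_gaussianMixturePDF_smul_apply_marginalVelocity (A := fun x => fderiv ℝ φ (t, x))
    hσ hβ ((hφ.continuous_fderiv one_ne_zero).comp (by fun_prop)) ?_
  have hvel : Integrable (fun q : E × E => β' • q.1 + σ' • q.2) (ν.prod (stdGaussian E)) :=
    ((hν.comp_fst _).smul _).add ((IsGaussian.integrable_id.comp_snd _).smul _)
  exact integrable_fderiv_apply hφ hsupp (Continuous.aestronglyMeasurable (by fun_prop))
    ((integrable_const (1 : ℝ)).prodMk hvel)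

theorem gif_continuity_equation_weak_general (hν : Integrable id ν)
    {t₀ t₁ : ℝ} {a b a' b' : ℝ → ℝ}
    (ha : ∀ t ∈ Ioo t₀ t₁, HasDerivAt a (a' t) t) (hb : ∀ t ∈ Ioo t₀ t₁, HasDerivAt b (b' t) t)
    (ha_ne : ∀ t ∈ Ioo t₀ t₁, a t ≠ 0) (hb_ne : ∀ t ∈ Ioo t₀ t₁, b t ≠ 0)
    (ha'_int : IntegrableOn a' (Ioo t₀ t₁)) (hb'_int : IntegrableOn b' (Ioo t₀ t₁))
    (hφ : ContDiff ℝ 1 φ) (hsupp : HasCompactSupport φ)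
    (hzero : ∀ t ∉ Ioo t₀ t₁, ∀ x, φ (t, x) = 0) :
    ∫ t in Ioo t₀ t₁, ∫ x, (deriv (fun u => φ (u, x)) t
        + ⟪marginalVelocity ν (b t) (a t) (b' t) (a' t) x, gradient (fun z => φ (t, z)) x⟫)
        * gaussianMixturePDF ν (b t) (a t) x = 0 := by
  rw [setIntegral_congr_fun measurableSet_Ioo fun t ht =>
    integral_deriv_add_inner_marginalVelocity_mul_gaussianMixturePDF hν (ha_ne t ht) (hb_ne t ht)
      (b' t) (a' t) hφ hsupp]
  exact setIntegral_integral_fderiv_interpolation_eq_zero hφ hsupp hzero hb ha hb'_int ha'_int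
    (hν.comp_fst _) (IsGaussian.integrable_id.comp_snd _)

end WeakContinuityEquation

/-- **Continuity equation in the weak sense for the Gaussian interpolation marginals.**
If `ν` is a probability measure on `ℝ^d`, absolutely continuous w.r.t. Lebesgue measure and
with finite second moment, then for every smooth compactly supported test function
`φ : (0,1) × ℝ^d → ℝ`,
`∫_0^1 ∫ (∂_t φ + ⟨v(t,x), ∇_x φ⟩) p_t(x) dx dt = 0`. -/
theorem gif_continuity_equation_weak
    (d : ℕ) (hd : 1 ≤ d)
    (ν : Measure (EuclideanSpace ℝ (Fin d))) [IsProbabilityMeasure ν]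
    (hac : ν ≪ volume)
    (hmom : Integrable (fun y => ‖y‖ ^ 2) ν)
    -- interpolation coefficients
    (a b : ℝ → ℝ)
    (ha'_nonpos : ∀ t ∈ Icc (0:ℝ) 1, deriv a t ≤ 0)
    (hb'_nonneg : ∀ t ∈ Icc (0:ℝ) 1, 0 ≤ deriv b t)
    (ha0 : 0 < a 0) (hb0 : 0 ≤ b 0) (ha1 : a 1 = 0) (hb1 : b 1 = 1)
    (ha_pos : ∀ t ∈ Ioo (0:ℝ) 1, 0 < a t)
    (hb_pos : ∀ t ∈ Ioo (0:ℝ) 1, 0 < b t)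
    (ha_C2 : ContDiffOn ℝ 2 a (Ico 0 1))
    (hb_C2 : ContDiffOn ℝ 2 b (Ico 0 1))
    (ha2_C1 : ContDiffOn ℝ 1 (fun t => (a t) ^ 2) (Icc 0 1))
    (hb_C1 : ContDiffOn ℝ 1 b (Icc 0 1))
    -- marginal density, score and velocity field
    (p : ℝ → EuclideanSpace ℝ (Fin d) → ℝ)
    (hp : ∀ t x, p t x =
      ∫ y, (2 * π * (a t) ^ 2) ^ (-(d:ℝ)/2) * exp (-‖x - b t • y‖ ^ 2 / (2 * (a t) ^ 2)) ∂ν)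
    (s : ℝ → EuclideanSpace ℝ (Fin d) → EuclideanSpace ℝ (Fin d))
    (hs : ∀ t ∈ Ioo (0:ℝ) 1, ∀ x, s t x = gradient (fun z => Real.log (p t z)) x)
    (v : ℝ → EuclideanSpace ℝ (Fin d) → EuclideanSpace ℝ (Fin d))
    (hv : ∀ t ∈ Ioo (0:ℝ) 1, ∀ x,
      v t x = (deriv b t / b t) • x
        + ((deriv b t / b t) * (a t) ^ 2 - deriv a t * a t) • s t x)
    -- test function, smooth and compactly supported inside (0,1) × ℝ^d
    (φ : ℝ × EuclideanSpace ℝ (Fin d) → ℝ)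
    (hφ_smooth : ContDiff ℝ (⊤ : ℕ∞) φ)
    (hφ_cpt : HasCompactSupport φ)
    (hφ_supp : Function.support φ ⊆ (Ioo (0:ℝ) 1) ×ˢ (univ : Set (EuclideanSpace ℝ (Fin d)))) :
    ∫ t in Ioo (0:ℝ) 1, ∫ x,
      (deriv (fun u => φ (u, x)) t + ⟪v t x, gradient (fun z => φ (t, z)) x⟫) * p t x
      = 0 := by
  have ha_deriv (t) (ht : t ∈ Ioo (0 : ℝ) 1) : HasDerivAt a (deriv a t) t :=
    hasDerivAt_deriv_of_contDiffOn_Ico two_ne_zero ha_C2 ht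
  have hb_deriv (t) (ht : t ∈ Ioo (0 : ℝ) 1) : HasDerivAt b (deriv b t) t :=
    hasDerivAt_deriv_of_contDiffOn_Ico two_ne_zero hb_C2 ht
  have ha_cont : ContinuousOn a (Icc 0 1) := continuousOn_of_sq_of_nonneg ha2_C1.continuousOn <|
    nonneg_on_Icc_of_nonneg_on_Ioo ha0.le ha1.ge fun t ht => (ha_pos t ht).le
  have hp_mixture (t) : p t = gaussianMixturePDF ν (b t) (a t) := by
    ext x; simpa [gaussianMixturePDF, isotropicGaussianPDF] using hp t x
  have hv_marginal (t) (ht : t ∈ Ioo (0 : ℝ) 1) :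
      v t = marginalVelocity ν (b t) (a t) (deriv b t) (deriv a t) := by
    ext1 x; rw [hv t ht, hs t ht, hp_mixture, marginalVelocity]
  rw [setIntegral_congr_fun measurableSet_Ioo fun t ht => by rw [hp_mixture t, hv_marginal t ht]]
  exact gif_continuity_equation_weak_general (integrable_id_of_integrable_sq_norm hmom)
    ha_deriv hb_deriv (fun t ht => (ha_pos t ht).ne') (fun t ht => (hb_pos t ht).ne')
    (integrableOn_Ioo_deriv_of_nonpos ha_cont ha_deriv fun t ht => ha'_nonpos t ⟨ht.1.le, ht.2.le⟩)
    (integrableOn_Ioo_deriv_of_nonneg hb_C1.continuousOn hb_deriv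
      fun t ht => hb'_nonneg t ⟨ht.1.le, ht.2.le⟩)
    (hφ_smooth.of_le (by norm_num)) hφ_cpt
    fun t ht x => by_contra fun hne => ht (hφ_supp hne).1
end
end

section
/- Suppose ν(dy) = exp(−U(y)) dy is a probability measure on ℝ^d with finite second moment, U ∈ C²(ℝ^d), and ∇²U(y) ⪯ β I_d for all y (ν is β-semi-log-convex) for some β > 0. Then for every t ∈ (0,1) and every x ∈ ℝ^d, ∇_x v(t,x) ⪰ ((β a_t ȧ_t + b_t ḃ_t)/(β a_t² + b_t²)) I_d. -/
open MeasureTheory Real Set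
open scoped RealInnerProductSpace ENNReal

noncomputable section

/-!
Put `D = β a² + b²`. Multiplying `p_t(x)` by `exp (β ‖x‖² / (2 D))`, completing the square and
translating the integration variable by `(b / D) x` turns the Gaussian integral into
`∫ exp (V (z + (b / D) x) - D ‖z‖² / (2 a²)) dz` with `V = β ‖·‖² / 2 - U`, which is convex. So the
tilted density is a mixture of log-convex functions of `x`, hence log-convex by Jensen's
inequality for `exp`, that is, `∇² log p_t ⪰ -β / D`. The Jacobian of the velocity is affine in
this Hessian with the nonnegative slope `(b' / b) a² - a' a`.

That `p_t` is `C²` holds because the functions `exp (-c ‖z‖²) h z` with `h` of temperate growth are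
bounded and stable under differentiation.
-/

section Hessian

lemma convexOn_univ_iff_forall_line {E : Type*} [AddCommGroup E] [Module ℝ E] {f : E → ℝ} :
    ConvexOn ℝ univ f ↔ ∀ x w, ConvexOn ℝ univ fun r : ℝ ↦ f (x + r • w) := by
  refine ⟨fun hf x w ↦ ?_, fun h ↦ ⟨convex_univ, fun x _ y _ p q hp hq hpq ↦ ?_⟩⟩
  · simpa [Function.comp_def, AffineMap.lineMap_apply_module', add_comm] using
      hf.comp_affineMap (AffineMap.lineMap x (x + w))
  · have hxy := (h y (x - y)).2 (mem_univ 1) (mem_univ 0) hp hq hpq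
    have hcomb : y + p • (x - y) = p • x + q • y := by
      rw [← eq_sub_iff_add_eq'] at hpq
      subst hpq
      module
    simpa [hcomb] using hxy

lemma convexOn_univ_iff_deriv2_nonneg {f : ℝ → ℝ} (hf : Differentiable ℝ f)
    (hf' : Differentiable ℝ (deriv f)) :
    ConvexOn ℝ univ f ↔ ∀ r, 0 ≤ deriv (deriv f) r := by
  refine ⟨fun h r ↦ ?_, convexOn_univ_of_deriv2_nonneg hf hf'⟩
  have hmono : Monotone (deriv f) :=
    monotoneOn_univ.1 (h.monotoneOn_deriv fun r _ ↦ hf r)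
  exact hmono.deriv_nonneg

variable {E : Type*} [NormedAddCommGroup E] [NormedSpace ℝ E]

lemma convexOn_univ_iff_fderiv_fderiv_nonneg {f : E → ℝ} (hf : Differentiable ℝ f)
    (hf' : Differentiable ℝ (fderiv ℝ f)) :
    ConvexOn ℝ univ f ↔ ∀ x w, 0 ≤ fderiv ℝ (fderiv ℝ f) x w w := by
  have hderiv (x w : E) :
      (deriv fun r : ℝ ↦ f (x + r • w)) = fun r ↦ fderiv ℝ f (x + r • w) w :=
    funext fun r ↦ (hf _).deriv_comp_add_smul
  have hderiv₂ (x w : E) (r : ℝ) : (deriv (deriv fun r : ℝ ↦ f (x + r • w))) r =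
      fderiv ℝ (fderiv ℝ f) (x + r • w) w w := by
    have hfw : DifferentiableAt ℝ (fun z ↦ fderiv ℝ f z w) (x + r • w) := by fun_prop
    rw [hderiv, hfw.deriv_comp_add_smul, fderiv_clm_apply (by fun_prop) (by fun_prop)]
    simp
  have hline (x w : E) : ConvexOn ℝ univ (fun r : ℝ ↦ f (x + r • w)) ↔
      ∀ r : ℝ, 0 ≤ fderiv ℝ (fderiv ℝ f) (x + r • w) w w := by
    rw [convexOn_univ_iff_deriv2_nonneg (by fun_prop) (by rw [hderiv]; fun_prop)]
    simp only [hderiv₂]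
  simp only [convexOn_univ_iff_forall_line, hline]
  exact ⟨fun h x w ↦ by simpa using h x w 0, fun h x w r ↦ h _ w⟩

end Hessian

section HessianInner

variable {E : Type*} [NormedAddCommGroup E] [InnerProductSpace ℝ E]

lemma strongConvexOn_univ_iff_le_fderiv_fderiv {f : E → ℝ} {m : ℝ} (hf : Differentiable ℝ f)
    (hf' : Differentiable ℝ (fderiv ℝ f)) :
    StrongConvexOn univ m f ↔ ∀ x w, m * ‖w‖ ^ 2 ≤ fderiv ℝ (fderiv ℝ f) x w w := by
  let J : E →L[ℝ] E →L[ℝ] ℝ := innerSL ℝ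
  have hJ (x w : E) : J x w = ⟪x, w⟫ := rfl
  have hderiv (x : E) :
      HasFDerivAt (fun x ↦ f x - m / 2 * ‖x‖ ^ 2) (fderiv ℝ f x - (m • J) x) x := by
    refine ((hf x).hasFDerivAt.fun_sub
      ((hasFDerivAt_id x).norm_sq.const_mul (m / 2))).congr_fderiv ?_
    ext w
    simp only [id_eq, ContinuousLinearMap.comp_id, sub_apply, smul_apply, coe_innerSL_apply,
      nsmul_eq_mul, Nat.cast_ofNat, smul_eq_mul, hJ, sub_right_inj]
    ring
  have hderiv₂ (x : E) :
      HasFDerivAt (fun x ↦ fderiv ℝ f x - (m • J) x) (fderiv ℝ (fderiv ℝ f) x - m • J) x :=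
    (hf' x).hasFDerivAt.fun_sub (m • J).hasFDerivAt
  have hfderiv := funext fun x ↦ (hderiv x).fderiv
  rw [strongConvexOn_iff_convex, convexOn_univ_iff_fderiv_fderiv_nonneg
    (fun x ↦ (hderiv x).differentiableAt)
    (by rw [hfderiv]; exact fun x ↦ (hderiv₂ x).differentiableAt), hfderiv]
  refine forall₂_congr fun x w ↦ ?_
  rw [(hderiv₂ x).fderiv]
  simp [hJ]

lemma strongConcaveOn_univ_of_iteratedFDeriv_two_le {U : E → ℝ} {β : ℝ} (hU : ContDiff ℝ 2 U)
    (hβ : ∀ x w : E, iteratedFDeriv ℝ 2 U x ![w, w] ≤ β * ‖w‖ ^ 2) :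
    StrongConcaveOn univ (-β) U := by
  have hneg : ContDiff ℝ 2 (-U) := hU.neg
  have hfderiv : fderiv ℝ (-U) = -fderiv ℝ U := funext fun _ ↦ fderiv_neg
  have hconv : StrongConvexOn univ (-β) (-U) :=
    (strongConvexOn_univ_iff_le_fderiv_fderiv (hneg.differentiable two_ne_zero)
      ((hneg.fderiv_right (m := 1) le_rfl).differentiable one_ne_zero)).2 fun x w ↦ by
        simpa [iteratedFDeriv_two_apply, hfderiv, fderiv_neg] using hβ x w
  rw [← neg_neg U]
  exact UniformConvexOn.neg hconv

lemma inner_fderiv_gradient [CompleteSpace E] {f : E → ℝ} {x : E} (w w' : E) :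
    ⟪w, fderiv ℝ (gradient f) x w'⟫ = fderiv ℝ (fderiv ℝ f) x w' w := by
  let T : StrongDual ℝ E ≃L[ℝ] E := (InnerProductSpace.toDual ℝ E).symm.toContinuousLinearEquiv
  have hgrad : gradient f = T ∘ fderiv ℝ f := rfl
  rw [hgrad, T.comp_fderiv, real_inner_comm]
  exact InnerProductSpace.toDual_symm_apply

end HessianInner

lemma convexOn_log_integral_exp {Ω E : Type*} [MeasurableSpace Ω] [AddCommGroup E] [Module ℝ E]
    {μ : Measure Ω} [NeZero μ] {s : Set E} {φ : E → Ω → ℝ} (hs : Convex ℝ s)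
    (hφ : ∀ᵐ ω ∂μ, ConvexOn ℝ s fun x ↦ φ x ω)
    (hint : ∀ x ∈ s, Integrable (fun ω ↦ exp (φ x ω)) μ) :
    ConvexOn ℝ s fun x ↦ log (∫ ω, exp (φ x ω) ∂μ) := by
  refine ⟨hs, fun x hx y hy p q hp hq hpq ↦ ?_⟩
  have hxy := hs hx hy hp hq hpq
  set A := ∫ ω, exp (φ x ω) ∂μ
  set B := ∫ ω, exp (φ y ω) ∂μ
  have hApos : 0 < A := integral_exp_pos (hint x hx)
  have hBpos : 0 < B := integral_exp_pos (hint y hy)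
  simp only [smul_eq_mul]
  rw [log_le_iff_le_exp (integral_exp_pos (hint _ hxy))]
  set L := p * log A + q * log B
  have hle : ∀ᵐ ω ∂μ, exp (φ (p • x + q • y) ω) ≤
      exp L * (p * (exp (φ x ω) / A) + q * (exp (φ y ω) / B)) := by
    filter_upwards [hφ] with ω hω
    have hconv := hω.2 hx hy hp hq hpq
    have hexp := convexOn_exp.2 (mem_univ (φ x ω - log A)) (mem_univ (φ y ω - log B)) hp hq hpq
    simp only [smul_eq_mul, exp_sub, exp_log hApos, exp_log hBpos] at hconv hexp
    calc exp (φ (p • x + q • y) ω)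
        ≤ exp (L + (p * (φ x ω - log A) + q * (φ y ω - log B))) := by
          gcongr
          linarith
      _ = exp L * exp (p * (φ x ω - log A) + q * (φ y ω - log B)) := exp_add _ _
      _ ≤ _ := by gcongr
  have hintA := ((hint x hx).div_const A).const_mul p
  have hintB := ((hint y hy).div_const B).const_mul q
  calc ∫ ω, exp (φ (p • x + q • y) ω) ∂μ
      ≤ ∫ ω, exp L * (p * (exp (φ x ω) / A) + q * (exp (φ y ω) / B)) ∂μ :=
        integral_mono_ae (hint _ hxy) ((hintA.add hintB).const_mul _) hle
    _ = exp L * (p * (A / A) + q * (B / B)) := by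
        rw [integral_const_mul, integral_add hintA hintB, integral_const_mul, integral_const_mul,
          integral_div, integral_div]
    _ = exp L := by rw [div_self hApos.ne', div_self hBpos.ne', mul_one, mul_one, hpq, mul_one]

section GaussianAverage

lemma exists_one_add_pow_mul_exp_neg_mul_sq_le {c : ℝ} (hc : 0 < c) (k : ℕ) :
    ∃ M, ∀ r : ℝ, 0 ≤ r → (1 + r) ^ k * exp (-(c * r ^ 2)) ≤ M := by
  refine ⟨k.factorial * exp (1 + 1 / (4 * c)), fun r hr ↦ ?_⟩
  have hpow : (1 + r) ^ k ≤ k.factorial * exp (1 + r) := by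
    rw [← div_le_iff₀' (by positivity)]
    exact pow_div_factorial_le_exp _ (by positivity) k
  have hsq : r - c * r ^ 2 ≤ 1 / (4 * c) := by
    rw [le_div_iff₀ (by positivity)]
    nlinarith [sq_nonneg (2 * c * r - 1)]
  calc (1 + r) ^ k * exp (-(c * r ^ 2))
      ≤ k.factorial * exp (1 + r) * exp (-(c * r ^ 2)) := by gcongr
    _ = k.factorial * exp (1 + (r - c * r ^ 2)) := by
        rw [mul_assoc, ← exp_add]
        ring_nf
    _ ≤ k.factorial * exp (1 + 1 / (4 * c)) := by gcongr

variable {E F Ω : Type*} [NormedAddCommGroup E] [NormedAddCommGroup F] [NormedSpace ℝ F]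
  [MeasurableSpace Ω] {μ : Measure Ω} [IsFiniteMeasure μ] {Y : Ω → E}

section Normed

variable [NormedSpace ℝ E]

lemma hasFDerivAt_integral_comp_sub {f : E → F} {f' : E → E →L[ℝ] F} {M M' : ℝ}
    (hf : ∀ z, HasFDerivAt f (f' z) z) (hf' : Continuous f')
    (hM : ∀ z, ‖f z‖ ≤ M) (hM' : ∀ z, ‖f' z‖ ≤ M')
    (hY : AEStronglyMeasurable Y μ) (x : E) :
    HasFDerivAt (fun x ↦ ∫ ω, f (x - Y ω) ∂μ) (∫ ω, f' (x - Y ω) ∂μ) x := by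
  have hfc : Continuous f := continuous_iff_continuousAt.2 fun z ↦ (hf z).continuousAt
  have hmeas (x : E) : AEStronglyMeasurable (fun ω ↦ f (x - Y ω)) μ :=
    hfc.comp_aestronglyMeasurable (aestronglyMeasurable_const.sub hY)
  refine hasFDerivAt_integral_of_dominated_of_fderiv_le (F := fun x ω ↦ f (x - Y ω))
    (F' := fun x ω ↦ f' (x - Y ω)) (bound := fun _ ↦ M') Filter.univ_mem (.of_forall hmeas)
    (.of_bound (hmeas x) M (.of_forall fun _ ↦ hM _))
    (hf'.comp_aestronglyMeasurable (aestronglyMeasurable_const.sub hY))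
    (.of_forall fun _ _ _ ↦ hM' _) (integrable_const _) (.of_forall fun ω z _ ↦ ?_)
  simpa only [Function.comp_def, ContinuousLinearMap.comp_id] using!
    (hf (z - Y ω)).comp z ((hasFDerivAt_id z).sub_const (Y ω))

lemma hasTemperateGrowth_fderiv {h : E → F} (hh : h.HasTemperateGrowth) :
    (fderiv ℝ h).HasTemperateGrowth := by
  refine ⟨hh.1.fderiv_right (by simp), fun n ↦ ?_⟩
  simpa only [norm_iteratedFDeriv_fderiv] using hh.2 (n + 1)

lemma exists_norm_exp_neg_mul_norm_sq_smul_le {c : ℝ} (hc : 0 < c) {h : E → F}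
    (hh : h.HasTemperateGrowth) : ∃ M, ∀ z, ‖exp (-(c * ‖z‖ ^ 2)) • h z‖ ≤ M := by
  obtain ⟨k, C, hC⟩ := hh.2 0
  have hCnonneg : 0 ≤ C := by simpa using (norm_nonneg _).trans (hC 0)
  obtain ⟨M, hM⟩ := exists_one_add_pow_mul_exp_neg_mul_sq_le hc k
  refine ⟨C * M, fun z ↦ ?_⟩
  calc ‖exp (-(c * ‖z‖ ^ 2)) • h z‖ = exp (-(c * ‖z‖ ^ 2)) * ‖h z‖ := by
        rw [norm_smul, norm_of_nonneg (exp_pos _).le]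
    _ ≤ exp (-(c * ‖z‖ ^ 2)) * (C * (1 + ‖z‖) ^ k) := by
        gcongr
        simpa using hC z
    _ = C * ((1 + ‖z‖) ^ k * exp (-(c * ‖z‖ ^ 2))) := by ring
    _ ≤ C * M := by
        gcongr
        exact hM _ (norm_nonneg z)

end Normed

variable [InnerProductSpace ℝ E]

lemma exists_hasTemperateGrowth_hasFDerivAt_exp_smul (c : ℝ) {h : E → F}
    (hh : h.HasTemperateGrowth) :
    ∃ h' : E → E →L[ℝ] F, h'.HasTemperateGrowth ∧
      ∀ z, HasFDerivAt (fun z ↦ exp (-(c * ‖z‖ ^ 2)) • h z) (exp (-(c * ‖z‖ ^ 2)) • h' z) z := by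
  let J : E →L[ℝ] E →L[ℝ] ℝ := innerSL ℝ
  have hJ (x w : E) : J x w = ⟪x, w⟫ := rfl
  refine ⟨fun z ↦ fderiv ℝ h z - (2 * c) • (J z).smulRight (h z), ?_, fun z ↦ ?_⟩
  · have hsmul : (fun z ↦ (J z).smulRight (h z)).HasTemperateGrowth :=
      (ContinuousLinearMap.smulRightL ℝ E F).bilinear_hasTemperateGrowth J.hasTemperateGrowth hh
    have hfderiv := hasTemperateGrowth_fderiv hh
    fun_prop
  · have hexp := ((hasFDerivAt_id z).norm_sq.const_mul c).neg.exp
    have hdiff := (hh.1.differentiable (by simp) z).hasFDerivAt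
    refine (hexp.smul hdiff).congr_fderiv ?_
    ext w
    simp only [id_eq, Pi.neg_apply, ContinuousLinearMap.comp_id, smul_neg, add_apply, smul_apply,
      ContinuousLinearMap.smulRight_apply, neg_apply, coe_innerSL_apply, nsmul_eq_mul,
      Nat.cast_ofNat, smul_eq_mul, neg_smul, sub_apply, hJ]
    module

lemma exists_hasTemperateGrowth_hasFDerivAt_integral {c : ℝ} (hc : 0 < c)
    (hY : AEStronglyMeasurable Y μ) {h : E → F} (hh : h.HasTemperateGrowth) :
    ∃ h' : E → E →L[ℝ] F, h'.HasTemperateGrowth ∧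
      ∀ x, HasFDerivAt (fun x ↦ ∫ ω, exp (-(c * ‖x - Y ω‖ ^ 2)) • h (x - Y ω) ∂μ)
        (∫ ω, exp (-(c * ‖x - Y ω‖ ^ 2)) • h' (x - Y ω) ∂μ) x := by
  obtain ⟨h', hh', hderiv⟩ := exists_hasTemperateGrowth_hasFDerivAt_exp_smul c hh
  obtain ⟨M, hM⟩ := exists_norm_exp_neg_mul_norm_sq_smul_le hc hh
  obtain ⟨M', hM'⟩ := exists_norm_exp_neg_mul_norm_sq_smul_le hc hh'
  have hcont : Continuous h' := hh'.1.continuous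
  exact ⟨h', hh', hasFDerivAt_integral_comp_sub hderiv (by fun_prop) hM hM' hY⟩

lemma contDiff_two_integral_exp {c : ℝ} (hc : 0 < c) (hY : AEStronglyMeasurable Y μ) :
    ContDiff ℝ 2 fun x ↦ ∫ ω, exp (-(c * ‖x - Y ω‖ ^ 2)) ∂μ := by
  have hone : (fun _ : E ↦ (1 : ℝ)).HasTemperateGrowth := .const 1
  obtain ⟨h₁, hh₁, hderiv₁⟩ := exists_hasTemperateGrowth_hasFDerivAt_integral hc hY hone
  obtain ⟨h₂, hh₂, hderiv₂⟩ := exists_hasTemperateGrowth_hasFDerivAt_integral hc hY hh₁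
  obtain ⟨h₃, -, hderiv₃⟩ := exists_hasTemperateGrowth_hasFDerivAt_integral hc hY hh₂
  simp only [smul_eq_mul, mul_one] at hderiv₁
  exact contDiff_succ_iff_hasFDerivAt.2 ⟨_, contDiff_one_iff_hasFDerivAt.2
    ⟨_, continuous_iff_continuousAt.2 fun x ↦ (hderiv₃ x).continuousAt, hderiv₂⟩, hderiv₁⟩

end GaussianAverage

section TiltedExponent

variable {E : Type*} [NormedAddCommGroup E] [InnerProductSpace ℝ E] {β a b : ℝ}

lemma div_mul_norm_sq_sub_norm_sub_smul_sq_div (ha : a ≠ 0) (hD : β * a ^ 2 + b ^ 2 ≠ 0)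
    (x z : E) :
    β / (β * a ^ 2 + b ^ 2) / 2 * ‖x‖ ^ 2 -
        (2 * a ^ 2)⁻¹ * ‖x - b • (z + (b / (β * a ^ 2 + b ^ 2)) • x)‖ ^ 2 =
      β / 2 * ‖z + (b / (β * a ^ 2 + b ^ 2)) • x‖ ^ 2 -
        (β * a ^ 2 + b ^ 2) / (2 * a ^ 2) * ‖z‖ ^ 2 := by
  obtain ⟨D, hD'⟩ : ∃ D, D = β * a ^ 2 + b ^ 2 := ⟨_, rfl⟩
  rw [← hD'] at hD ⊢
  have hx : x - b • (z + (b / D) • x) = (1 - b * (b / D)) • x - b • z := by module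
  rw [hx, norm_sub_sq_real, norm_add_sq_real]
  simp only [norm_smul, real_inner_smul_left, real_inner_smul_right, mul_pow, norm_eq_abs, sq_abs,
    real_inner_comm x z]
  have hb : b ^ 2 = D - β * a ^ 2 := by rw [hD']; ring
  field_simp
  linear_combination -(D ^ 2 * ‖z‖ ^ 2 + 2 * D * b * ⟪x, z⟫ + (b ^ 2 - D) * ‖x‖ ^ 2) * hb

/-- The exponent whose `exp`-integral over `z` is the tilted, unnormalised marginal density
`exp (β / (2 * D) * ‖x‖ ^ 2) * ∫ y, exp (-‖x - b • y‖ ^ 2 / (2 * a ^ 2) - U y)`, where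
`D = β * a ^ 2 + b ^ 2` and `y = z + (b / D) • x`. -/
def tiltedExponent (U : E → ℝ) (β a b : ℝ) (x z : E) : ℝ :=
  β / 2 * ‖z + (b / (β * a ^ 2 + b ^ 2)) • x‖ ^ 2 - U (z + (b / (β * a ^ 2 + b ^ 2)) • x) -
    (β * a ^ 2 + b ^ 2) / (2 * a ^ 2) * ‖z‖ ^ 2

lemma convexOn_tiltedExponent {U : E → ℝ} (hU : StrongConcaveOn univ (-β) U) (a b : ℝ) (z : E) :
    ConvexOn ℝ univ fun x ↦ tiltedExponent U β a b x z := by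
  have hpot : ConvexOn ℝ univ fun y ↦ β / 2 * ‖y‖ ^ 2 - U y :=
    (strongConcaveOn_iff_convex.1 hU).neg.congr fun y _ ↦ by
      rw [Pi.neg_apply]
      ring
  have hshift := hpot.comp_affineMap
    (AffineMap.const ℝ E z + ((b / (β * a ^ 2 + b ^ 2)) • LinearMap.id).toAffineMap)
  exact (hshift.add_const _).congr fun x _ ↦ rfl

lemma exp_tiltedExponent (U : E → ℝ) (ha : a ≠ 0) (hD : β * a ^ 2 + b ^ 2 ≠ 0) (x z : E) :
    exp (tiltedExponent U β a b x z) =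
      exp (β / (β * a ^ 2 + b ^ 2) / 2 * ‖x‖ ^ 2) *
        (exp (-U (z + (b / (β * a ^ 2 + b ^ 2)) • x)) *
          exp (-((2 * a ^ 2)⁻¹ * ‖x - b • (z + (b / (β * a ^ 2 + b ^ 2)) • x)‖ ^ 2))) := by
  rw [← exp_add, ← exp_add, tiltedExponent]
  congr 1
  linear_combination -div_mul_norm_sq_sub_norm_sub_smul_sq_div ha hD x z

end TiltedExponent

section Velocity

open Module

variable {E : Type*} [NormedAddCommGroup E] [InnerProductSpace ℝ E]
  [MeasurableSpace E]

/-- The density `p_t` of the interpolant `a_t Z + b_t Y`, with `Z` standard Gaussian and `Y`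
of law `ν`; here `a` and `b` are the values of the coefficients at a single time. -/
def marginalDensity (ν : Measure E) (a b : ℝ) (x : E) : ℝ :=
  ∫ y, (2 * π * a ^ 2) ^ (-(finrank ℝ E : ℝ) / 2) * exp (-‖x - b • y‖ ^ 2 / (2 * a ^ 2)) ∂ν

/-- The score `∇ log p_t`, with the conventions of `marginalDensity`. -/
def score [CompleteSpace E] (ν : Measure E) (a b : ℝ) (x : E) : E :=
  gradient (fun z ↦ log (marginalDensity ν a b z)) x

/-- The velocity field of the interpolant at a single time, where the coefficients take the
values `a`, `b` and have the rates `a'`, `b'`. -/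
def velocity [CompleteSpace E] (ν : Measure E) (a b a' b' : ℝ) (x : E) : E :=
  (b' / b) • x + (b' / b * a ^ 2 - a' * a) • score ν a b x

lemma marginalDensity_eq (ν : Measure E) (a b : ℝ) (x : E) :
    marginalDensity ν a b x = (2 * π * a ^ 2) ^ (-(finrank ℝ E : ℝ) / 2) *
      ∫ y, exp (-((2 * a ^ 2)⁻¹ * ‖x - b • y‖ ^ 2)) ∂ν := by
  simp only [marginalDensity, integral_const_mul, div_eq_inv_mul, mul_neg]

variable [BorelSpace E] [FiniteDimensional ℝ E] {ν : Measure E} {β a b : ℝ}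

/-- A measure `exp (-U) dy` is `β`-semi-log-convex when `∇²U ⪯ β`. The Hessian bound is encoded,
without differentiability of `U`, as concavity of `U - β / 2 * ‖·‖ ^ 2`. -/
def IsSemiLogConvex (β : ℝ) (ν : Measure E) : Prop :=
  ∃ U : E → ℝ, StrongConcaveOn univ (-β) U ∧
    ν = volume.withDensity fun y ↦ ENNReal.ofReal (exp (-U y))

section Finite

variable [IsFiniteMeasure ν]

lemma integrable_exp_neg_mul_norm_sub_smul_sq {c : ℝ} (hc : 0 ≤ c) (b : ℝ) (x : E) :
    Integrable (fun y ↦ exp (-(c * ‖x - b • y‖ ^ 2))) ν := by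
  refine .of_bound (by fun_prop) 1 (.of_forall fun y ↦ ?_)
  rw [norm_of_nonneg (exp_pos _).le, exp_le_one_iff, neg_nonpos]
  positivity

variable [NeZero ν]

lemma integral_exp_neg_mul_norm_sub_smul_sq_pos {c : ℝ} (hc : 0 ≤ c) (b : ℝ) (x : E) :
    0 < ∫ y, exp (-(c * ‖x - b • y‖ ^ 2)) ∂ν :=
  integral_exp_pos (integrable_exp_neg_mul_norm_sub_smul_sq hc b x)

lemma marginalDensity_pos (ha : a ≠ 0) (x : E) : 0 < marginalDensity ν a b x := by
  have hint := integral_exp_neg_mul_norm_sub_smul_sq_pos (ν := ν)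
    (c := (2 * a ^ 2)⁻¹) (by positivity) b x
  rw [marginalDensity_eq]
  positivity

lemma contDiff_two_log_marginalDensity (ha : a ≠ 0) :
    ContDiff ℝ 2 fun x ↦ log (marginalDensity ν a b x) := by
  have hsmooth : ContDiff ℝ 2 (marginalDensity ν a b) := by
    simp only [funext (marginalDensity_eq ν a b)]
    exact contDiff_const.mul (contDiff_two_integral_exp (by positivity) (by fun_prop))
  exact hsmooth.log fun x ↦ (marginalDensity_pos ha x).ne'

end Finite

omit [MeasurableSpace E] [BorelSpace E] in
lemma continuous_of_strongConcaveOn_univ {U : E → ℝ} {m : ℝ} (hU : StrongConcaveOn univ m U) :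
    Continuous U := by
  have hcont := continuousOn_univ.1 ((strongConcaveOn_iff_convex.1 hU).continuousOn isOpen_univ)
  exact (hcont.sub (by fun_prop : Continuous fun y ↦ m / 2 * ‖y‖ ^ 2)).congr fun y ↦
    add_sub_cancel_right _ _

lemma IsSemiLogConvex.neZero (hν : IsSemiLogConvex β ν) : NeZero ν := by
  obtain ⟨U, hU, rfl⟩ := hν
  have hUc := continuous_of_strongConcaveOn_univ hU
  refine ⟨fun h ↦ ?_⟩
  rw [withDensity_eq_zero_iff (by fun_prop)] at h
  obtain ⟨y, hy⟩ := h.exists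
  exact (ENNReal.ofReal_pos.2 (exp_pos (-U y))).ne' hy

lemma integrable_exp_tiltedExponent {U : E → ℝ} (hU : Measurable U)
    [IsFiniteMeasure (volume.withDensity fun y ↦ ENNReal.ofReal (exp (-U y)))]
    (ha : a ≠ 0) (hD : β * a ^ 2 + b ^ 2 ≠ 0) (x : E) :
    Integrable fun z ↦ exp (tiltedExponent U β a b x z) := by
  have hgauss := integrable_exp_neg_mul_norm_sub_smul_sq
    (ν := volume.withDensity fun y ↦ ENNReal.ofReal (exp (-U y)))
    (c := (2 * a ^ 2)⁻¹) (by positivity) b x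
  rw [integrable_withDensity_iff_integrable_smul' (by fun_prop)
    (.of_forall fun _ ↦ ENNReal.ofReal_lt_top)] at hgauss
  simp only [ENNReal.toReal_ofReal (exp_pos _).le, smul_eq_mul] at hgauss
  simp only [exp_tiltedExponent U ha hD x]
  exact (hgauss.comp_add_right _).const_mul _

lemma integral_exp_tiltedExponent {U : E → ℝ} (hU : Measurable U) (ha : a ≠ 0)
    (hD : β * a ^ 2 + b ^ 2 ≠ 0) (x : E) :
    ∫ z, exp (tiltedExponent U β a b x z) =
      exp (β / (β * a ^ 2 + b ^ 2) / 2 * ‖x‖ ^ 2) *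
        ∫ y, exp (-((2 * a ^ 2)⁻¹ * ‖x - b • y‖ ^ 2))
          ∂volume.withDensity fun y ↦ ENNReal.ofReal (exp (-U y)) := by
  rw [integral_withDensity_eq_integral_toReal_smul (by fun_prop)
    (.of_forall fun _ ↦ ENNReal.ofReal_lt_top)]
  simp only [exp_tiltedExponent U ha hD x, integral_const_mul,
    ENNReal.toReal_ofReal (exp_pos _).le, smul_eq_mul]
  congr 1
  exact integral_add_right_eq_self
    (fun y ↦ exp (-U y) * exp (-((2 * a ^ 2)⁻¹ * ‖x - b • y‖ ^ 2))) _

variable [IsFiniteMeasure ν]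

lemma strongConvexOn_log_marginalDensity (hν : IsSemiLogConvex β ν) (ha : a ≠ 0)
    (hD : β * a ^ 2 + b ^ 2 ≠ 0) :
    StrongConvexOn univ (-(β / (β * a ^ 2 + b ^ 2))) fun x ↦ log (marginalDensity ν a b x) := by
  have := hν.neZero
  obtain ⟨U, hU, rfl⟩ := hν
  have hUm := (continuous_of_strongConcaveOn_univ hU).measurable
  have hconv := convexOn_log_integral_exp convex_univ
    (.of_forall (convexOn_tiltedExponent hU a b)) fun x _ ↦
      integrable_exp_tiltedExponent hUm ha hD x
  refine strongConvexOn_iff_convex.2 ((hconv.add_const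
    (log ((2 * π * a ^ 2) ^ (-(finrank ℝ E : ℝ) / 2)))).congr fun x _ ↦ ?_)
  have hpos := integral_exp_neg_mul_norm_sub_smul_sq_pos
    (ν := volume.withDensity fun y ↦ ENNReal.ofReal (exp (-U y)))
    (c := (2 * a ^ 2)⁻¹) (by positivity) b x
  rw [Pi.add_apply, integral_exp_tiltedExponent hUm ha hD, marginalDensity_eq,
    log_mul (exp_pos _).ne' hpos.ne', log_exp, log_mul (by positivity) hpos.ne']
  ring

lemma inner_fderiv_velocity [NeZero ν] (ha : a ≠ 0) (b a' b' : ℝ) (x w : E) :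
    ⟪w, fderiv ℝ (velocity ν a b a' b') x w⟫ = b' / b * ‖w‖ ^ 2 + (b' / b * a ^ 2 - a' * a) *
      fderiv ℝ (fderiv ℝ fun z ↦ log (marginalDensity ν a b z)) x w w := by
  have hgrad : Differentiable ℝ (gradient fun z ↦ log (marginalDensity ν a b z)) :=
    (InnerProductSpace.toDual ℝ E).symm.toContinuousLinearEquiv.differentiable.comp
      (((contDiff_two_log_marginalDensity ha).fderiv_right (m := 1) le_rfl).differentiable
        one_ne_zero)
  have hderiv := ((hasFDerivAt_id x).const_smul (b' / b)).add
    ((hgrad x).hasFDerivAt.const_smul (b' / b * a ^ 2 - a' * a))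
  have hvelocity : velocity ν a b a' b' = (b' / b) • id +
      (b' / b * a ^ 2 - a' * a) • gradient (fun z ↦ log (marginalDensity ν a b z)) := rfl
  rw [hvelocity, hderiv.fderiv]
  simp [inner_add_right, inner_smul_right, inner_fderiv_gradient]

theorem velocity_jacobian_lower_bound_semi_log_convex_general (hν : IsSemiLogConvex β ν)
    (hβ : 0 < β) (ha : 0 < a) (hb : 0 < b) {a' b' : ℝ} (ha' : a' ≤ 0) (hb' : 0 ≤ b') (x w : E) :
    (β * a * a' + b * b') / (β * a ^ 2 + b ^ 2) * ‖w‖ ^ 2 ≤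
      ⟪w, fderiv ℝ (velocity ν a b a' b') x w⟫ := by
  have := hν.neZero
  have hD : β * a ^ 2 + b ^ 2 ≠ 0 := by positivity
  have hsmooth := contDiff_two_log_marginalDensity (ν := ν) (b := b) ha.ne'
  have hhess := (strongConvexOn_univ_iff_le_fderiv_fderiv (hsmooth.differentiable two_ne_zero)
    ((hsmooth.fderiv_right (m := 1) le_rfl).differentiable one_ne_zero)).1
      (strongConvexOn_log_marginalDensity hν ha.ne' hD) x w
  have hcoeff : 0 ≤ b' / b * a ^ 2 - a' * a :=
    sub_nonneg.2 ((mul_nonpos_of_nonpos_of_nonneg ha' ha.le).trans (by positivity))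
  calc (β * a * a' + b * b') / (β * a ^ 2 + b ^ 2) * ‖w‖ ^ 2
      = b' / b * ‖w‖ ^ 2 + (b' / b * a ^ 2 - a' * a) *
          (-(β / (β * a ^ 2 + b ^ 2)) * ‖w‖ ^ 2) := by
        field_simp
        ring
    _ ≤ b' / b * ‖w‖ ^ 2 + (b' / b * a ^ 2 - a' * a) *
          fderiv ℝ (fderiv ℝ fun z ↦ log (marginalDensity ν a b z)) x w w := by gcongr
    _ = ⟪w, fderiv ℝ (velocity ν a b a' b') x w⟫ := (inner_fderiv_velocity ha.ne' b a' b' x w).symm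

end Velocity

/-- **Lower Jacobian bound for β-semi-log-convex targets.** If `ν(dy) = exp(−U(y)) dy`
with `∇²U ⪯ β I` for some `β > 0`, then for all `t ∈ (0,1)` and `x`,
`∇_x v(t,x) ⪰ ((β a_t ȧ_t + b_t ḃ_t)/(β a_t² + b_t²)) I` (as quadratic forms). -/
theorem velocity_jacobian_lower_bound_semi_log_convex
    (d : ℕ) (hd : 1 ≤ d)
    (β : ℝ) (hβ : 0 < β)
    (U : EuclideanSpace ℝ (Fin d) → ℝ)
    (hU_C2 : ContDiff ℝ 2 U)
    (hU_conv : ∀ y : EuclideanSpace ℝ (Fin d), ∀ w : EuclideanSpace ℝ (Fin d),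
      iteratedFDeriv ℝ 2 U y ![w, w] ≤ β * ‖w‖ ^ 2)
    (ν : Measure (EuclideanSpace ℝ (Fin d))) [IsProbabilityMeasure ν]
    (hν : ν = volume.withDensity (fun y => ENNReal.ofReal (exp (-U y))))
    (hmom : Integrable (fun y => ‖y‖ ^ 2) ν)
    -- interpolation coefficients
    (a b : ℝ → ℝ)
    (ha'_nonpos : ∀ t ∈ Icc (0:ℝ) 1, deriv a t ≤ 0)
    (hb'_nonneg : ∀ t ∈ Icc (0:ℝ) 1, 0 ≤ deriv b t)
    (ha0 : 0 < a 0) (hb0 : 0 ≤ b 0) (ha1 : a 1 = 0) (hb1 : b 1 = 1)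
    (ha_pos : ∀ t ∈ Ioo (0:ℝ) 1, 0 < a t)
    (hb_pos : ∀ t ∈ Ioo (0:ℝ) 1, 0 < b t)
    (ha_C2 : ContDiffOn ℝ 2 a (Ico 0 1))
    (hb_C2 : ContDiffOn ℝ 2 b (Ico 0 1))
    (ha2_C1 : ContDiffOn ℝ 1 (fun t => (a t) ^ 2) (Icc 0 1))
    (hb_C1 : ContDiffOn ℝ 1 b (Icc 0 1))
    -- marginal density, score and velocity field
    (p : ℝ → EuclideanSpace ℝ (Fin d) → ℝ)
    (hp : ∀ t x, p t x =
      ∫ y, (2 * π * (a t) ^ 2) ^ (-(d:ℝ)/2) * exp (-‖x - b t • y‖ ^ 2 / (2 * (a t) ^ 2)) ∂ν)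
    (s : ℝ → EuclideanSpace ℝ (Fin d) → EuclideanSpace ℝ (Fin d))
    (hs : ∀ t ∈ Ioo (0:ℝ) 1, ∀ x, s t x = gradient (fun z => Real.log (p t z)) x)
    (v : ℝ → EuclideanSpace ℝ (Fin d) → EuclideanSpace ℝ (Fin d))
    (hv : ∀ t ∈ Ioo (0:ℝ) 1, ∀ x,
      v t x = (deriv b t / b t) • x
        + ((deriv b t / b t) * (a t) ^ 2 - deriv a t * a t) • s t x) :
    ∀ t ∈ Ioo (0:ℝ) 1, ∀ x, ∀ w : EuclideanSpace ℝ (Fin d),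
      ((β * a t * deriv a t + b t * deriv b t) / (β * (a t) ^ 2 + (b t) ^ 2)) * ‖w‖ ^ 2
        ≤ ⟪w, fderiv ℝ (v t) x w⟫ := by
  intro t ht x w
  have hvelocity : v t = velocity ν (a t) (b t) (deriv a t) (deriv b t) := by
    ext1 z
    simp only [hv t ht, hs t ht, hp, velocity, score, marginalDensity,
      finrank_euclideanSpace_fin]
  have ht' := Ioo_subset_Icc_self ht
  rw [hvelocity]
  exact velocity_jacobian_lower_bound_semi_log_convex_general
    ⟨U, strongConcaveOn_univ_of_iteratedFDeriv_two_le hU_C2 hU_conv, hν⟩ hβ (ha_pos t ht)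
    (hb_pos t ht) (ha'_nonpos t ht') (hb'_nonneg t ht') x w
end
end

section
/- Fix a probability measure ρ on ℝ^d supported on a closed Euclidean ball of radius R, let σ > 0, and let ν := γ_{d,σ²} * ρ be the convolution of ρ with the Gaussian N(0, σ² I_d). Then for every t ∈ (0,1) and every x ∈ ℝ^d, ((ȧ_t a_t + σ² ḃ_t b_t)/(a_t² + σ² b_t²)) I_d ⪯ ∇_x v(t,x) ⪯ ( (a_t b_t (a_t ḃ_t − ȧ_t b_t)/(a_t² + σ² b_t²)²) R² + (ȧ_t a_t + σ² ḃ_t b_t)/(a_t² + σ² b_t²) ) I_d. -/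
open MeasureTheory Real Set
open scoped RealInnerProductSpace ENNReal

noncomputable section

/-!
Convolving `ρ` with a Gaussian of variance `σ²` only inflates the variance of the mixture kernel:
the marginal density at `x` is the mixture over `ρ` of the Gaussians of variance `T = a² + σ² b²`
centered at `b y`. Expanding the square, `log p` is `-‖x‖² / (2 T)` plus the log-Laplace transform
at `(b / T) x` of a tilt of `ρ`. The Hessian of a log-Laplace transform is the covariance of the
exponentially tilted law, here the posterior of `y` given `x`, so that
`∇v = (a' a + σ² b' b) / T • I + a b (a b' - a' b) / T² • Cov(y ∣ x)`.
The posterior lives on the ball that carries `ρ`, hence `0 ⪯ Cov(y ∣ x) ⪯ R² I`.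
-/

section BoundedRandomVector

open ProbabilityTheory

variable {E : Type*} [NormedAddCommGroup E] [InnerProductSpace ℝ E] [MeasurableSpace E]
  [BorelSpace E]

lemma variance_inner_le_of_ae_norm_sub_le {P : Measure E} [IsProbabilityMeasure P] {c : E} {R : ℝ}
    (hP : ∀ᵐ y ∂P, ‖y - c‖ ≤ R) (w : E) :
    Var[fun y ↦ ⟪w, y⟫; P] ≤ R ^ 2 * ‖w‖ ^ 2 := by
  have hmem : ∀ᵐ y ∂P, ⟪w, y⟫ ∈ Icc (⟪w, c⟫ - ‖w‖ * R) (⟪w, c⟫ + ‖w‖ * R) := by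
    filter_upwards [hP] with y hy
    have habs : |⟪w, y⟫ - ⟪w, c⟫| ≤ ‖w‖ * R := by
      rw [← inner_sub_right]
      exact (abs_real_inner_le_norm w (y - c)).trans (by gcongr)
    exact ⟨by linarith [abs_le.1 habs], by linarith [abs_le.1 habs]⟩
  calc Var[fun y ↦ ⟪w, y⟫; P]
      ≤ ((⟪w, c⟫ + ‖w‖ * R - (⟪w, c⟫ - ‖w‖ * R)) / 2) ^ 2 :=
        variance_le_sq_of_bounded hmem (by fun_prop)
    _ = R ^ 2 * ‖w‖ ^ 2 := by ring

variable [CompleteSpace E]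

lemma covarianceBilin_eq_inner_covarianceOperator_sub {P : Measure E} [IsProbabilityMeasure P]
    (hP : MemLp id 2 P) (x y : E) :
    covarianceBilin P x y = ⟪covarianceOperator P x, y⟫ - ⟪x, P[id]⟫ * ⟪y, P[id]⟫ := by
  have hmean (z : E) : ∫ u, ⟪z, u⟫ ∂P = ⟪z, P[id]⟫ :=
    integral_inner (hP.integrable one_le_two) z
  rw [covarianceBilin_apply_eq_cov hP, covarianceOperator_inner hP, ← hmean, ← hmean]
  exact covariance_eq_sub (hP.const_inner x) (hP.const_inner y)

end BoundedRandomVector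

section ExponentialFamily

open ProbabilityTheory InnerProductSpace

variable {E : Type*} [NormedAddCommGroup E] [InnerProductSpace ℝ E]

lemma exp_inner_le_exp_norm_mul {B : ℝ} {y : E} (hy : ‖y‖ ≤ B) (θ : E) :
    exp ⟪θ, y⟫ ≤ exp (‖θ‖ * B) :=
  exp_le_exp.2 <| (real_inner_le_norm θ y).trans <| by gcongr

variable [MeasurableSpace E]

/-- The member with natural parameter `θ` of the exponential family generated by `μ`, that is, the
normalization of `exp ⟪θ, y⟫ μ(dy)`. -/
def expTilt (μ : Measure E) (θ : E) : Measure E := μ.tilted fun y ↦ ⟪θ, y⟫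

/-- The logarithm of the (two-sided) Laplace transform of `μ`. -/
def logLaplace (μ : Measure E) (θ : E) : ℝ := log (∫ y, exp ⟪θ, y⟫ ∂μ)

variable {F : Type*} [NormedAddCommGroup F] [NormedSpace ℝ F] {μ : Measure E} {B : ℝ}

lemma integral_expTilt (μ : Measure E) (θ : E) (h : E → F) :
    ∫ y, h y ∂(expTilt μ θ) = (∫ y, exp ⟪θ, y⟫ ∂μ)⁻¹ • ∫ y, exp ⟪θ, y⟫ • h y ∂μ := by
  simp_rw [expTilt, integral_tilted, div_eq_inv_mul, mul_smul, integral_smul]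

lemma expTilt_absolutelyContinuous (μ : Measure E) (θ : E) : expTilt μ θ ≪ μ :=
  tilted_absolutelyContinuous μ _

variable [BorelSpace E] [SecondCountableTopology E]

lemma integrable_exp_inner_smul (hμ : ∀ᵐ y ∂μ, ‖y‖ ≤ B) {h : E → F} (hh : Integrable h μ) (θ : E) :
    Integrable (fun y ↦ exp ⟪θ, y⟫ • h y) μ := by
  refine hh.bdd_smul (exp (‖θ‖ * B)) (by fun_prop) ?_
  filter_upwards [hμ] with y hy
  rw [norm_of_nonneg (exp_pos _).le]
  exact exp_inner_le_exp_norm_mul hy θ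

lemma integrable_exp_inner [IsFiniteMeasure μ] (hμ : ∀ᵐ y ∂μ, ‖y‖ ≤ B) (θ : E) :
    Integrable (fun y ↦ exp ⟪θ, y⟫) μ := by
  simpa using integrable_exp_inner_smul hμ (integrable_const (1 : ℝ)) θ

lemma isProbabilityMeasure_expTilt [IsFiniteMeasure μ] [NeZero μ] (hμ : ∀ᵐ y ∂μ, ‖y‖ ≤ B) (θ : E) :
    IsProbabilityMeasure (expTilt μ θ) :=
  isProbabilityMeasure_tilted (integrable_exp_inner hμ θ)

lemma integrable_exp_inner_smulRight (hμ : ∀ᵐ y ∂μ, ‖y‖ ≤ B) {h : E → F} (hh : Integrable h μ)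
    (θ : E) : Integrable (fun y ↦ exp ⟪θ, y⟫ • (innerSL ℝ y).smulRight (h y)) μ := by
  refine integrable_exp_inner_smul hμ ?_ θ
  refine (hh.norm.const_mul B).mono' ?_ ?_
  · exact (ContinuousLinearMap.smulRightL ℝ E F).aestronglyMeasurable_comp₂
      ((innerSL ℝ).continuous.comp_aestronglyMeasurable aestronglyMeasurable_id) hh.1
  · filter_upwards [hμ] with y hy
    rw [ContinuousLinearMap.norm_smulRight_apply, innerSL_apply_norm]
    gcongr

lemma hasFDerivAt_integral_exp_inner_smul (hμ : ∀ᵐ y ∂μ, ‖y‖ ≤ B) {h : E → F}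
    (hh : Integrable h μ) (θ : E) :
    HasFDerivAt (fun θ ↦ ∫ y, exp ⟪θ, y⟫ • h y ∂μ)
      (∫ y, exp ⟪θ, y⟫ • (innerSL ℝ y).smulRight (h y) ∂μ) θ := by
  refine hasFDerivAt_integral_of_dominated_of_fderiv_le
    (F := fun θ y ↦ exp ⟪θ, y⟫ • h y)
    (F' := fun θ y ↦ exp ⟪θ, y⟫ • (innerSL ℝ y).smulRight (h y))
    (bound := fun y ↦ exp ((‖θ‖ + 1) * B) * (B * ‖h y‖))
    (Metric.ball_mem_nhds θ one_pos)
    (.of_forall fun η ↦ (integrable_exp_inner_smul hμ hh η).aestronglyMeasurable)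
    (integrable_exp_inner_smul hμ hh θ)
    (integrable_exp_inner_smulRight hμ hh θ).aestronglyMeasurable ?_
    ((hh.norm.const_mul B).const_mul _) ?_
  · filter_upwards [hμ] with y hy η hη
    have hη_norm : ‖η‖ ≤ ‖θ‖ + 1 := by
      linarith [norm_le_norm_add_norm_sub' η θ, mem_ball_iff_norm.1 hη]
    have hB : 0 ≤ B := (norm_nonneg y).trans hy
    rw [norm_smul, norm_of_nonneg (exp_pos _).le, ContinuousLinearMap.norm_smulRight_apply,
      innerSL_apply_norm]
    have hexp : exp ⟪η, y⟫ ≤ exp ((‖θ‖ + 1) * B) :=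
      (exp_inner_le_exp_norm_mul hy η).trans (by gcongr)
    gcongr
  · refine .of_forall fun y η _ ↦ ?_
    have hinner : HasFDerivAt (fun η : E ↦ ⟪η, y⟫) (innerSL ℝ y) η := by
      simpa only [real_inner_comm] using! (innerSL ℝ y).hasFDerivAt
    refine (hinner.exp.smul_const (h y)).congr_fderiv ?_
    ext w
    simp [mul_smul]

lemma integral_exp_inner_smulRight_apply (hμ : ∀ᵐ y ∂μ, ‖y‖ ≤ B) {h : E → F}
    (hh : Integrable h μ) (θ w : E) :
    (∫ y, exp ⟪θ, y⟫ • (innerSL ℝ y).smulRight (h y) ∂μ) w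
      = ∫ y, exp ⟪θ, y⟫ • ⟪w, y⟫ • h y ∂μ := by
  rw [ContinuousLinearMap.integral_apply (integrable_exp_inner_smulRight hμ hh θ)]
  simp [real_inner_comm]

variable [IsFiniteMeasure μ] [NeZero μ]

lemma memLp_id_expTilt (hμ : ∀ᵐ y ∂μ, ‖y‖ ≤ B) (θ : E) (p : ℝ≥0∞) : MemLp id p (expTilt μ θ) :=
  have : IsProbabilityMeasure (expTilt μ θ) := isProbabilityMeasure_expTilt hμ θ
  .of_bound aestronglyMeasurable_id B (expTilt_absolutelyContinuous μ θ hμ)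

lemma integral_exp_inner_smul (hμ : ∀ᵐ y ∂μ, ‖y‖ ≤ B) (θ : E) (h : E → F) :
    ∫ y, exp ⟪θ, y⟫ • h y ∂μ = (∫ y, exp ⟪θ, y⟫ ∂μ) • ∫ y, h y ∂(expTilt μ θ) := by
  rw [integral_expTilt, smul_inv_smul₀ (integral_exp_pos (integrable_exp_inner hμ θ)).ne']

variable [CompleteSpace E]

lemma hasFDerivAt_integral_exp_inner (hμ : ∀ᵐ y ∂μ, ‖y‖ ≤ B) (θ : E) :
    HasFDerivAt (fun θ ↦ ∫ y, exp ⟪θ, y⟫ ∂μ)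
      ((∫ y, exp ⟪θ, y⟫ ∂μ) • innerSL ℝ (∫ y, y ∂(expTilt μ θ))) θ := by
  have := isProbabilityMeasure_expTilt hμ θ
  have hZ := hasFDerivAt_integral_exp_inner_smul hμ (integrable_const (1 : ℝ)) θ
  simp only [smul_eq_mul, mul_one] at hZ
  refine hZ.congr_fderiv (ContinuousLinearMap.ext fun w ↦ ?_)
  have hmean : ∫ y, ⟪w, y⟫ ∂(expTilt μ θ) = ⟪∫ y, y ∂(expTilt μ θ), w⟫ := by
    rw [real_inner_comm]
    exact integral_inner ((memLp_id_expTilt hμ θ 1).integrable le_rfl) w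
  rw [integral_exp_inner_smulRight_apply hμ (integrable_const _), integral_exp_inner_smul hμ]
  simp [hmean]

theorem hasFDerivAt_logLaplace (hμ : ∀ᵐ y ∂μ, ‖y‖ ≤ B) (θ : E) :
    HasFDerivAt (logLaplace μ) (innerSL ℝ (∫ y, y ∂(expTilt μ θ))) θ := by
  have hpos := integral_exp_pos (integrable_exp_inner hμ θ)
  refine ((hasFDerivAt_integral_exp_inner hμ θ).log hpos.ne').congr_fderiv ?_
  rw [inv_smul_smul₀ hpos.ne']

theorem hasFDerivAt_integral_expTilt (hμ : ∀ᵐ y ∂μ, ‖y‖ ≤ B) (θ : E) :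
    HasFDerivAt (fun θ ↦ ∫ y, y ∂(expTilt μ θ))
      (continuousLinearMapOfBilin (𝕜 := ℝ) (covarianceBilin (expTilt μ θ))) θ := by
  have := isProbabilityMeasure_expTilt hμ θ
  have hP := memLp_id_expTilt hμ θ 2
  have hid : Integrable (fun y ↦ y) μ := .of_bound aestronglyMeasurable_id B hμ
  have hpos := integral_exp_pos (integrable_exp_inner hμ θ)
  have hinv := (hasDerivAt_inv hpos.ne').comp_hasFDerivAt θ (hasFDerivAt_integral_exp_inner hμ θ)
  have hquot := hinv.smul (hasFDerivAt_integral_exp_inner_smul hμ hid θ)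
  simp_rw [integral_expTilt μ _ fun y ↦ y]
  refine hquot.congr_fderiv (ContinuousLinearMap.ext fun w ↦ ext_inner_right ℝ fun u ↦ ?_)
  rw [continuousLinearMapOfBilin_apply, covarianceBilin_eq_inner_covarianceOperator_sub hP,
    covarianceOperator_apply hP]
  simp only [add_apply, smul_apply, ContinuousLinearMap.smulRight_apply, innerSL_apply_apply,
    Function.comp_apply, integral_exp_inner_smulRight_apply hμ hid]
  simp only [integral_exp_inner_smul hμ, inner_add_left, real_inner_smul_left, smul_eq_mul, id]
  rw [real_inner_comm w, real_inner_comm u (∫ y, y ∂expTilt μ θ)]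
  field_simp
  ring

end ExponentialFamily

section Gaussian

variable {E : Type*} [NormedAddCommGroup E] [InnerProductSpace ℝ E]

/-- The density of the centered isotropic Gaussian with variance `s`. -/
def gaussianDensity (s : ℝ) (x : E) : ℝ :=
  (2 * π * s) ^ (-(Module.finrank ℝ E : ℝ) / 2) * exp (-‖x‖ ^ 2 / (2 * s))

lemma continuous_gaussianDensity (s : ℝ) : Continuous (gaussianDensity (E := E) s) := by
  unfold gaussianDensity
  fun_prop

lemma gaussianDensity_nonneg {s : ℝ} (hs : 0 ≤ s) (x : E) : 0 ≤ gaussianDensity s x := by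
  unfold gaussianDensity
  positivity

lemma gaussianDensity_mul_gaussianDensity {s t : ℝ} (hs : 0 < s) (ht : 0 < t) (β : ℝ) (u z : E) :
    gaussianDensity s z * gaussianDensity t (u - β • z)
      = gaussianDensity (t + s * β ^ 2) u *
        gaussianDensity (s * t / (t + s * β ^ 2)) (z - (β * s / (t + s * β ^ 2)) • u) := by
  have hexponent : -‖z‖ ^ 2 / (2 * s) + -‖u - β • z‖ ^ 2 / (2 * t)
      = -‖u‖ ^ 2 / (2 * (t + s * β ^ 2)) + -‖z - (β * s / (t + s * β ^ 2)) • u‖ ^ 2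
        / (2 * (s * t / (t + s * β ^ 2))) := by
    simp only [norm_sub_sq_real, norm_smul, mul_pow, norm_eq_abs, sq_abs, real_inner_smul_right,
      real_inner_comm u z]
    field_simp
    ring
  have hvariance : 2 * π * s * (2 * π * t)
      = 2 * π * (t + s * β ^ 2) * (2 * π * (s * t / (t + s * β ^ 2))) := by
    field_simp
  unfold gaussianDensity
  rw [mul_mul_mul_comm, ← mul_rpow (by positivity) (by positivity), ← exp_add, hexponent,
    hvariance, mul_rpow (by positivity) (by positivity), exp_add, mul_mul_mul_comm]

variable [FiniteDimensional ℝ E] [MeasurableSpace E] [BorelSpace E]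

lemma integral_exp_neg_norm_sq_div {s : ℝ} (hs : 0 < s) :
    ∫ x : E, exp (-‖x‖ ^ 2 / (2 * s)) = (2 * π * s) ^ ((Module.finrank ℝ E : ℝ) / 2) := by
  have h := GaussianFourier.integral_rexp_neg_mul_sq_norm (V := E) (b := (2 * s)⁻¹) (by positivity)
  convert h using 3 <;> field_simp

lemma integral_gaussianDensity {s : ℝ} (hs : 0 < s) : ∫ x : E, gaussianDensity s x = 1 := by
  simp_rw [gaussianDensity, integral_const_mul, integral_exp_neg_norm_sq_div hs]
  rw [neg_div, ← rpow_add (by positivity), neg_add_cancel, rpow_zero]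

lemma integral_gaussianDensity_mul_gaussianDensity {s t : ℝ} (hs : 0 < s) (ht : 0 < t) (β : ℝ)
    (u : E) : ∫ z, gaussianDensity s z * gaussianDensity t (u - β • z)
      = gaussianDensity (t + s * β ^ 2) u := by
  simp_rw [gaussianDensity_mul_gaussianDensity hs ht, integral_const_mul]
  rw [integral_sub_right_eq_self (gaussianDensity _), integral_gaussianDensity (by positivity),
    mul_one]

/-- The isotropic Gaussian measure with variance `s`. -/
def isotropicGaussian (s : ℝ) : Measure E :=
  volume.withDensity fun z ↦ ENNReal.ofReal (gaussianDensity s z)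

lemma isProbabilityMeasure_isotropicGaussian {s : ℝ} (hs : 0 < s) :
    IsProbabilityMeasure (isotropicGaussian s : Measure E) := by
  have hint := integrable_of_integral_eq_one (integral_gaussianDensity (E := E) hs)
  have hnonneg := gaussianDensity_nonneg (E := E) hs.le
  refine ⟨?_⟩
  rw [isotropicGaussian, withDensity_apply _ .univ, Measure.restrict_univ,
    ← ofReal_integral_eq_lintegral_ofReal hint (.of_forall hnonneg), integral_gaussianDensity hs,
    ENNReal.ofReal_one]

lemma integral_isotropicGaussian {s : ℝ} (hs : 0 ≤ s) (f : E → ℝ) :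
    ∫ z, f z ∂(isotropicGaussian s) = ∫ z, gaussianDensity s z * f z := by
  rw [isotropicGaussian, integral_withDensity_eq_integral_toReal_smul
    (continuous_gaussianDensity s).measurable.ennreal_ofReal (by simp)]
  simp [ENNReal.toReal_ofReal, gaussianDensity_nonneg hs]

end Gaussian

section GaussianMixture

open ProbabilityTheory InnerProductSpace

variable {E : Type*} [NormedAddCommGroup E] [InnerProductSpace ℝ E]

lemma neg_norm_sub_smul_sq_div (s β : ℝ) (x y : E) :
    -‖x - β • y‖ ^ 2 / (2 * s)
      = -‖x‖ ^ 2 / (2 * s) + (-‖0 - β • y‖ ^ 2 / (2 * s) + ⟪(β / s) • x, y⟫) := by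
  rw [norm_sub_sq_real, zero_sub, norm_neg, real_inner_smul_left, real_inner_smul_right]
  ring

variable [MeasurableSpace E]

/-- The density of `β Y + √s Z` for `Y` of law `ρ` and an independent standard Gaussian `Z`. -/
def gaussianMixtureDensity (s β : ℝ) (ρ : Measure E) (x : E) : ℝ :=
  ∫ y, gaussianDensity s (x - β • y) ∂ρ

/-- The law of `Y` given that `β Y + √s Z = x`, for `Y` of law `ρ` and an independent standard
Gaussian `Z`, in the form given by Bayes' rule. -/
def gaussianPosterior (s β : ℝ) (ρ : Measure E) (x : E) : Measure E :=
  ρ.tilted fun y ↦ -‖x - β • y‖ ^ 2 / (2 * s)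

lemma gaussianPosterior_absolutelyContinuous (s β : ℝ) (ρ : Measure E) (x : E) :
    gaussianPosterior s β ρ x ≪ ρ :=
  tilted_absolutelyContinuous ρ _

variable [BorelSpace E] [SecondCountableTopology E] {s : ℝ} {ρ : Measure E}

lemma integrable_exp_neg_norm_sub_smul_sq_div [IsFiniteMeasure ρ] (hs : 0 ≤ s) (β : ℝ) (x : E) :
    Integrable (fun y ↦ exp (-‖x - β • y‖ ^ 2 / (2 * s))) ρ := by
  refine .of_bound (by fun_prop) 1 (.of_forall fun y ↦ ?_)
  rw [norm_of_nonneg (exp_pos _).le, exp_le_one_iff]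
  exact div_nonpos_of_nonpos_of_nonneg (neg_nonpos.2 (sq_nonneg _)) (by positivity)

variable [IsFiniteMeasure ρ] [NeZero ρ]

lemma isProbabilityMeasure_gaussianPosterior (hs : 0 ≤ s) (β : ℝ) (x : E) :
    IsProbabilityMeasure (gaussianPosterior s β ρ x) :=
  isProbabilityMeasure_tilted (integrable_exp_neg_norm_sub_smul_sq_div hs β x)

lemma gaussianPosterior_eq_expTilt (hs : 0 ≤ s) (β : ℝ) (x : E) :
    gaussianPosterior s β ρ x = expTilt (gaussianPosterior s β ρ 0) ((β / s) • x) := by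
  have h0 := integrable_exp_neg_norm_sub_smul_sq_div (ρ := ρ) hs β 0
  have hprob := isProbabilityMeasure_gaussianPosterior (ρ := ρ) hs β x
  calc gaussianPosterior s β ρ x
      = (gaussianPosterior s β ρ x).tilted fun _ ↦ ‖x‖ ^ 2 / (2 * s) := (tilted_const _ _).symm
    _ = expTilt (gaussianPosterior s β ρ 0) ((β / s) • x) := by
        rw [expTilt, gaussianPosterior, gaussianPosterior,
          tilted_tilted (integrable_exp_neg_norm_sub_smul_sq_div hs β x), tilted_tilted h0]
        congr 1 with y
        rw [Pi.add_apply, Pi.add_apply, neg_norm_sub_smul_sq_div]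
        ring

lemma gaussianMixtureDensity_eq_mul (hs : 0 ≤ s) (β : ℝ) (x : E) :
    gaussianMixtureDensity s β ρ x = gaussianMixtureDensity s β ρ 0 *
      (exp (-‖x‖ ^ 2 / (2 * s)) * ∫ y, exp ⟪(β / s) • x, y⟫ ∂(gaussianPosterior s β ρ 0)) := by
  have h0 := integrable_exp_neg_norm_sub_smul_sq_div (ρ := ρ) hs β 0
  simp_rw [gaussianMixtureDensity, gaussianDensity, integral_const_mul,
    neg_norm_sub_smul_sq_div s β x, exp_add (-‖x‖ ^ 2 / (2 * s)), integral_const_mul]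
  rw [gaussianPosterior, integral_exp_tilted]
  simp only [Pi.add_apply]
  set Z := ∫ y, exp (-‖0 - β • y‖ ^ 2 / (2 * s)) ∂ρ
  have hZ : 0 < Z := integral_exp_pos h0
  field_simp

lemma gaussianMixtureDensity_pos (hs : 0 < s) (β : ℝ) (x : E) :
    0 < gaussianMixtureDensity s β ρ x := by
  simp_rw [gaussianMixtureDensity, gaussianDensity, integral_const_mul]
  exact mul_pos (by positivity)
    (integral_exp_pos (integrable_exp_neg_norm_sub_smul_sq_div hs.le β x))

lemma log_gaussianMixtureDensity (hs : 0 < s) (β : ℝ) {B : ℝ} (hρ : ∀ᵐ y ∂ρ, ‖y‖ ≤ B) (x : E) :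
    log (gaussianMixtureDensity s β ρ x) = log (gaussianMixtureDensity s β ρ 0)
      + (-‖x‖ ^ 2 / (2 * s) + logLaplace (gaussianPosterior s β ρ 0) ((β / s) • x)) := by
  have := isProbabilityMeasure_gaussianPosterior (ρ := ρ) hs.le β 0
  have hlaplace := integral_exp_pos <| integrable_exp_inner
    (gaussianPosterior_absolutelyContinuous s β ρ 0 hρ) ((β / s) • x)
  rw [gaussianMixtureDensity_eq_mul hs.le,
    log_mul (gaussianMixtureDensity_pos hs β 0).ne' (by positivity),
    log_mul (exp_ne_zero _) hlaplace.ne', log_exp, logLaplace]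

variable [CompleteSpace E] {B : ℝ}

/-- Tweedie's formula. -/
theorem hasGradientAt_log_gaussianMixtureDensity (hs : 0 < s) (β : ℝ) (hρ : ∀ᵐ y ∂ρ, ‖y‖ ≤ B)
    (x : E) : HasGradientAt (fun z ↦ log (gaussianMixtureDensity s β ρ z))
      ((β / s) • ∫ y, y ∂(gaussianPosterior s β ρ x) - s⁻¹ • x) x := by
  have := isProbabilityMeasure_gaussianPosterior (ρ := ρ) hs.le β 0
  have hlaplace := (hasFDerivAt_logLaplace
    (gaussianPosterior_absolutelyContinuous s β ρ 0 hρ) ((β / s) • x)).comp x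
    ((hasFDerivAt_id x).const_smul (β / s))
  have hsq := (hasStrictFDerivAt_norm_sq x).hasFDerivAt.neg.mul_const (2 * s)⁻¹
  rw [funext (log_gaussianMixtureDensity hs β hρ), gaussianPosterior_eq_expTilt hs.le β x]
  refine hasGradientAt_iff_hasFDerivAt.2 (((hsq.add hlaplace).const_add _).congr_fderiv ?_)
  ext w
  simp only [mul_inv_rev, smul_neg, ContinuousLinearMap.comp_smulₛₗ, map_div₀, ringHom_apply,
    ContinuousLinearMap.comp_id, add_apply, neg_apply, smul_apply, coe_innerSL_apply, nsmul_eq_mul,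
    Nat.cast_ofNat, smul_eq_mul, map_sub, map_smul, sub_apply, toDual_apply_apply]
  field_simp
  ring

theorem hasFDerivAt_gradient_log_gaussianMixtureDensity (hs : 0 < s) (β : ℝ)
    (hρ : ∀ᵐ y ∂ρ, ‖y‖ ≤ B) (x : E) :
    HasFDerivAt (gradient fun z ↦ log (gaussianMixtureDensity s β ρ z))
      ((β / s) ^ 2 • continuousLinearMapOfBilin (𝕜 := ℝ)
        (covarianceBilin (gaussianPosterior s β ρ x)) - s⁻¹ • .id ℝ E) x := by
  have := isProbabilityMeasure_gaussianPosterior (ρ := ρ) hs.le β 0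
  have hscore (z : E) : gradient (fun z ↦ log (gaussianMixtureDensity s β ρ z)) z
      = (β / s) • ∫ y, y ∂(expTilt (gaussianPosterior s β ρ 0) ((β / s) • z)) - s⁻¹ • z := by
    rw [(hasGradientAt_log_gaussianMixtureDensity hs β hρ z).gradient,
      gaussianPosterior_eq_expTilt hs.le]
  have hmean := (hasFDerivAt_integral_expTilt
    (gaussianPosterior_absolutelyContinuous s β ρ 0 hρ) ((β / s) • x)).comp x
    ((hasFDerivAt_id x).const_smul (β / s))
  rw [funext hscore, gaussianPosterior_eq_expTilt hs.le β x]
  refine ((hmean.const_smul (β / s)).sub ((hasFDerivAt_id x).const_smul s⁻¹)).congr_fderiv ?_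
  ext w
  simp [smul_smul, sq]

end GaussianMixture

section GaussianConvolution

variable {E : Type*} [NormedAddCommGroup E] [InnerProductSpace ℝ E] [FiniteDimensional ℝ E]
  [MeasurableSpace E] [BorelSpace E]

lemma integrable_gaussianDensity_sub_smul {ρ : Measure E} [IsFiniteMeasure ρ] {s : ℝ} (hs : 0 ≤ s)
    (β : ℝ) (x : E) : Integrable (fun y ↦ gaussianDensity s (x - β • y)) ρ :=
  (integrable_exp_neg_norm_sub_smul_sq_div hs β x).const_mul _

lemma gaussianMixtureDensity_isotropicGaussian_conv {ρ : Measure E} [IsFiniteMeasure ρ] {s τ : ℝ}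
    (hs : 0 < s) (hτ : 0 < τ) (β : ℝ) :
    gaussianMixtureDensity s β (isotropicGaussian τ ∗ ρ)
      = gaussianMixtureDensity (s + τ * β ^ 2) β ρ := by
  ext x
  have := isProbabilityMeasure_isotropicGaussian (E := E) hτ
  rw [gaussianMixtureDensity, Measure.conv_comm,
    integral_conv (integrable_gaussianDensity_sub_smul hs.le β x)]
  refine integral_congr_ae (.of_forall fun y ↦ ?_)
  simp_rw [smul_add, ← sub_sub]
  rw [integral_isotropicGaussian hτ.le, integral_gaussianDensity_mul_gaussianDensity hτ hs]

end GaussianConvolution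

section Velocity

open ProbabilityTheory InnerProductSpace

variable {E : Type*} [NormedAddCommGroup E] [InnerProductSpace ℝ E]

/-- The velocity at a fixed time of the probability flow with marginal density `p`, where `a`, `b`
are the noise and signal coefficients at that time and `a'`, `b'` their time derivatives. -/
def probabilityFlowVelocity [CompleteSpace E] (a a' b b' : ℝ) (p : E → ℝ) (x : E) : E :=
  (b' / b) • x + (b' / b * a ^ 2 - a' * a) • gradient (fun z ↦ log (p z)) x

variable [FiniteDimensional ℝ E] [MeasurableSpace E] [BorelSpace E] {ρ : Measure E}
  [IsFiniteMeasure ρ] [NeZero ρ] {a a' b b' τ : ℝ}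

theorem hasFDerivAt_probabilityFlowVelocity (ha : a ≠ 0) (hb : b ≠ 0) (hτ : 0 < τ) {B : ℝ}
    (hρ : ∀ᵐ y ∂ρ, ‖y‖ ≤ B) (x : E) :
    HasFDerivAt
      (probabilityFlowVelocity a a' b b'
        (gaussianMixtureDensity (a ^ 2) b (isotropicGaussian τ ∗ ρ)))
      (((a' * a + τ * b' * b) / (a ^ 2 + τ * b ^ 2)) • .id ℝ E
        + (a * b * (a * b' - a' * b) / (a ^ 2 + τ * b ^ 2) ^ 2) •
          continuousLinearMapOfBilin (𝕜 := ℝ)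
            (covarianceBilin (gaussianPosterior (a ^ 2 + τ * b ^ 2) b ρ x))) x := by
  have hT : 0 < a ^ 2 + τ * b ^ 2 := by positivity
  rw [gaussianMixtureDensity_isotropicGaussian_conv (by positivity) hτ]
  refine (((hasFDerivAt_id x).const_smul (b' / b)).add
    ((hasFDerivAt_gradient_log_gaussianMixtureDensity hT b hρ x).const_smul
      (b' / b * a ^ 2 - a' * a))).congr_fderiv ?_
  rw [smul_sub, smul_smul, smul_smul]
  match_scalars
  · field_simp
    ring
  · field_simp

theorem inner_fderiv_probabilityFlowVelocity (ha : a ≠ 0) (hb : b ≠ 0) (hτ : 0 < τ) {B : ℝ}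
    (hρ : ∀ᵐ y ∂ρ, ‖y‖ ≤ B) (x w : E) :
    ⟪w, fderiv ℝ (probabilityFlowVelocity a a' b b'
        (gaussianMixtureDensity (a ^ 2) b (isotropicGaussian τ ∗ ρ))) x w⟫
      = (a' * a + τ * b' * b) / (a ^ 2 + τ * b ^ 2) * ‖w‖ ^ 2
        + a * b * (a * b' - a' * b) / (a ^ 2 + τ * b ^ 2) ^ 2
          * Var[fun y ↦ ⟪w, y⟫; gaussianPosterior (a ^ 2 + τ * b ^ 2) b ρ x] := by
  have hT : 0 ≤ a ^ 2 + τ * b ^ 2 := by positivity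
  have := isProbabilityMeasure_gaussianPosterior (ρ := ρ) hT b x
  have hmemLp : MemLp id 2 (gaussianPosterior (a ^ 2 + τ * b ^ 2) b ρ x) :=
    .of_bound aestronglyMeasurable_id B (gaussianPosterior_absolutelyContinuous _ b ρ x hρ)
  rw [(hasFDerivAt_probabilityFlowVelocity ha hb hτ hρ x).fderiv]
  simp only [add_apply, smul_apply, ContinuousLinearMap.id_apply, inner_add_right,
    real_inner_smul_right, real_inner_self_eq_norm_sq, ← covarianceBilin_self hmemLp]
  rw [real_inner_comm _ w, continuousLinearMapOfBilin_apply]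

theorem velocity_jacobian_bounds_gaussian_mixture_general {R : ℝ}
    (hρ : ∃ c, ρ (Metric.closedBall c R)ᶜ = 0) (ha : 0 < a) (hb : 0 < b) (hτ : 0 < τ)
    (hab : a' * b ≤ a * b') (x : E) :
    let v := probabilityFlowVelocity a a' b b'
      (gaussianMixtureDensity (a ^ 2) b (isotropicGaussian τ ∗ ρ))
    DifferentiableAt ℝ v x ∧ ∀ w,
      (a' * a + τ * b' * b) / (a ^ 2 + τ * b ^ 2) * ‖w‖ ^ 2 ≤ ⟪w, fderiv ℝ v x w⟫
      ∧ ⟪w, fderiv ℝ v x w⟫ ≤ (a * b * (a * b' - a' * b) / (a ^ 2 + τ * b ^ 2) ^ 2 * R ^ 2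
        + (a' * a + τ * b' * b) / (a ^ 2 + τ * b ^ 2)) * ‖w‖ ^ 2 := by
  intro v
  obtain ⟨c, hc⟩ := hρ
  have hball : ∀ᵐ y ∂ρ, ‖y - c‖ ≤ R := by
    filter_upwards [mem_ae_iff.2 hc] with y hy using mem_closedBall_iff_norm.1 hy
  have hbounded : ∀ᵐ y ∂ρ, ‖y‖ ≤ ‖c‖ + R := by
    filter_upwards [hball] with y hy
    linarith [norm_le_norm_add_norm_sub' y c]
  have hT : 0 ≤ a ^ 2 + τ * b ^ 2 := by positivity
  have := isProbabilityMeasure_gaussianPosterior (ρ := ρ) hT b x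
  refine ⟨(hasFDerivAt_probabilityFlowVelocity ha.ne' hb.ne' hτ hbounded x).differentiableAt,
    fun w ↦ ?_⟩
  have hκ : 0 ≤ a * b * (a * b' - a' * b) / (a ^ 2 + τ * b ^ 2) ^ 2 :=
    div_nonneg (mul_nonneg (by positivity) (sub_nonneg.2 hab)) (by positivity)
  have hvar := variance_inner_le_of_ae_norm_sub_le
    (gaussianPosterior_absolutelyContinuous (a ^ 2 + τ * b ^ 2) b ρ x hball) w
  rw [inner_fderiv_probabilityFlowVelocity ha.ne' hb.ne' hτ hbounded]
  constructor
  · exact le_add_of_nonneg_right (mul_nonneg hκ (variance_nonneg _ _))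
  · linear_combination mul_le_mul_of_nonneg_left hvar hκ

end Velocity

/-- **Two-sided Jacobian bound for Gaussian-mollified targets.** If `ν = γ_{d,σ²} * ρ`
with `ρ` supported on a closed ball of radius `R`, then for all `t ∈ (0,1)` and `x`,
`((ȧ a + σ² ḃ b)/(a² + σ² b²)) I ⪯ ∇_x v(t,x)
  ⪯ ( a b (a ḃ − ȧ b)/(a² + σ² b²)² · R² + (ȧ a + σ² ḃ b)/(a² + σ² b²) ) I`
(as quadratic forms). -/
theorem velocity_jacobian_bounds_gaussian_mixture
    (d : ℕ) (hd : 1 ≤ d)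
    (R σ : ℝ) (hR : 0 ≤ R) (hσ : 0 < σ)
    (ρ : Measure (EuclideanSpace ℝ (Fin d))) [IsProbabilityMeasure ρ]
    (hρ_supp : ∃ c : EuclideanSpace ℝ (Fin d), ρ (Metric.closedBall c R)ᶜ = 0)
    -- the Gaussian measure N(0, σ² I_d)
    (γσ : Measure (EuclideanSpace ℝ (Fin d)))
    (hγσ : γσ = volume.withDensity (fun z =>
      ENNReal.ofReal ((2 * π * σ ^ 2) ^ (-(d:ℝ)/2) * exp (-‖z‖ ^ 2 / (2 * σ ^ 2)))))
    -- the target measure ν = γ_{d,σ²} * ρ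
    (ν : Measure (EuclideanSpace ℝ (Fin d))) [IsProbabilityMeasure ν]
    (hν : ν = Measure.map (fun q : EuclideanSpace ℝ (Fin d) × EuclideanSpace ℝ (Fin d) =>
      q.1 + q.2) (γσ.prod ρ))
    -- interpolation coefficients
    (a b : ℝ → ℝ)
    (ha'_nonpos : ∀ t ∈ Icc (0:ℝ) 1, deriv a t ≤ 0)
    (hb'_nonneg : ∀ t ∈ Icc (0:ℝ) 1, 0 ≤ deriv b t)
    (ha0 : 0 < a 0) (hb0 : 0 ≤ b 0) (ha1 : a 1 = 0) (hb1 : b 1 = 1)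
    (ha_pos : ∀ t ∈ Ioo (0:ℝ) 1, 0 < a t)
    (hb_pos : ∀ t ∈ Ioo (0:ℝ) 1, 0 < b t)
    (ha_C2 : ContDiffOn ℝ 2 a (Ico 0 1))
    (hb_C2 : ContDiffOn ℝ 2 b (Ico 0 1))
    (ha2_C1 : ContDiffOn ℝ 1 (fun t => (a t) ^ 2) (Icc 0 1))
    (hb_C1 : ContDiffOn ℝ 1 b (Icc 0 1))
    -- marginal density, score and velocity field
    (p : ℝ → EuclideanSpace ℝ (Fin d) → ℝ)
    (hp : ∀ t x, p t x =
      ∫ y, (2 * π * (a t) ^ 2) ^ (-(d:ℝ)/2) * exp (-‖x - b t • y‖ ^ 2 / (2 * (a t) ^ 2)) ∂ν)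
    (s : ℝ → EuclideanSpace ℝ (Fin d) → EuclideanSpace ℝ (Fin d))
    (hs : ∀ t ∈ Ioo (0:ℝ) 1, ∀ x, s t x = gradient (fun z => Real.log (p t z)) x)
    (v : ℝ → EuclideanSpace ℝ (Fin d) → EuclideanSpace ℝ (Fin d))
    (hv : ∀ t ∈ Ioo (0:ℝ) 1, ∀ x,
      v t x = (deriv b t / b t) • x
        + ((deriv b t / b t) * (a t) ^ 2 - deriv a t * a t) • s t x) :
    ∀ t ∈ Ioo (0:ℝ) 1, ∀ x, ∀ w : EuclideanSpace ℝ (Fin d),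
      ((deriv a t * a t + σ ^ 2 * deriv b t * b t) / ((a t) ^ 2 + σ ^ 2 * (b t) ^ 2))
          * ‖w‖ ^ 2
        ≤ ⟪w, fderiv ℝ (v t) x w⟫
      ∧ ⟪w, fderiv ℝ (v t) x w⟫
        ≤ (a t * b t * (a t * deriv b t - deriv a t * b t)
              / ((a t) ^ 2 + σ ^ 2 * (b t) ^ 2) ^ 2 * R ^ 2
            + (deriv a t * a t + σ ^ 2 * deriv b t * b t)
              / ((a t) ^ 2 + σ ^ 2 * (b t) ^ 2)) * ‖w‖ ^ 2 := by
  intro t ht x w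
  have hpt : p t = gaussianMixtureDensity (a t ^ 2) (b t) (isotropicGaussian (σ ^ 2) ∗ ρ) := by
    ext z
    simp [hp, hν, hγσ, gaussianMixtureDensity, gaussianDensity, isotropicGaussian, Measure.conv]
  have hvt : v t = probabilityFlowVelocity (a t) (deriv a t) (b t) (deriv b t) (p t) :=
    funext fun z ↦ by rw [hv t ht, hs t ht, probabilityFlowVelocity]
  have hat := ha_pos t ht
  have hbt := hb_pos t ht
  have ha't := ha'_nonpos t (Ioo_subset_Icc_self ht)
  have hb't := hb'_nonneg t (Ioo_subset_Icc_self ht)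
  have hab : deriv a t * b t ≤ a t * deriv b t :=
    (mul_nonpos_of_nonpos_of_nonneg ha't hbt.le).trans (mul_nonneg hat.le hb't)
  rw [hvt, hpt]
  exact (velocity_jacobian_bounds_gaussian_mixture_general
    hρ_supp hat hbt (by positivity) hab x).2 w
end
end

section
/- (Poincaré inequality along the interpolation) Let ν be a probability measure on ℝ^d satisfying the Poincaré inequality with constant C_P(ν) > 0: Var_ν(g) ≤ C_P(ν) ∫ ‖∇g‖² dν for all continuously differentiable g with the relevant integrals finite. Fix real numbers α, β ≥ 0 and let μ := Law(α Z + β X_1) with Z ~ N(0, I_d) independent of X_1 ~ ν. Then μ satisfies the Poincaré inequality with constant α² + β² C_P(ν): for every continuously differentiable f ∈ L²(μ) with ∫‖∇f‖² dμ < ∞, Var_μ(f) ≤ (α² + β² C_P(ν)) ∫ ‖∇f‖² dμ. In particular, for the Gaussian interpolation marginal p_t = Law(a_t Z + b_t X_1), C_P(p_t) ≤ a_t² + b_t² C_P(ν). -/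
open MeasureTheory Real Set
open scoped ENNReal

noncomputable section

/-!
Write `eVar` for the `ℝ≥0∞`-valued variance, and let an energy `Q` be a nonnegative function of the
differential. The inequality `eVar[f; μ] ≤ ∫ Q(df) dμ` behaves well under independent sums: if it
holds for `μ` with `Q₁` and for `ν` with `Q₂`, then by the Efron–Stein inequality it holds for
`μ ∗ ν` with `Q₁ + Q₂`, while scaling by `a` multiplies the energy `C‖ℓ‖²` by `a²`.
So everything reduces to the constant `1` for the standard Gaussian.

On the line, for independent copies `X, Y` of law `μ`, Cauchy–Schwarz on `[Y, X]` gives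
`Var f(X) ≤ ∫ k(s) f'(s)² ds` with `k(s) = E[(X - Y) 1{Y < s ≤ X}] = E[(X - EX) 1{X ≥ s}]`, and for
a Gaussian of variance `v` the tail `k` is `v` times its density. In dimension `d` a standard
Gaussian is the sum of `d` independent Gaussians along orthonormal directions `bᵢ`. Allowing
quadratic energies rather than constants is what keeps this dimension free: the `i`-th summand only
costs `ℓ(bᵢ)²`, and these add up to `‖ℓ‖²`.
-/

open Module ProbabilityTheory
open scoped NNReal

section SecondMoments

variable {Ω Ω' : Type*} [MeasurableSpace Ω] [MeasurableSpace Ω'] {μ : Measure Ω} {ν : Measure Ω'}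

lemma sq_lintegral_le_measure_univ_mul {g : Ω → ℝ≥0∞} (hg : AEMeasurable g μ) :
    (∫⁻ ω, g ω ∂μ) ^ 2 ≤ μ univ * ∫⁻ ω, g ω ^ 2 ∂μ := by
  have holder := ENNReal.lintegral_mul_le_Lp_mul_Lq μ Real.HolderConjugate.two_two
    aemeasurable_const hg (f := 1)
  simp only [Pi.mul_apply, Pi.one_apply, one_mul, lintegral_const,
    ENNReal.rpow_two, one_pow] at holder
  calc (∫⁻ ω, g ω ∂μ) ^ 2
      ≤ (μ univ ^ (1 / 2 : ℝ) * (∫⁻ ω, g ω ^ 2 ∂μ) ^ (1 / 2 : ℝ)) ^ 2 := by gcongr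
    _ = μ univ * ∫⁻ ω, g ω ^ 2 ∂μ := by
      simp only [mul_pow, ← ENNReal.rpow_natCast, ← ENNReal.rpow_mul]
      norm_num

lemma lintegral_enorm_sq_eq_ofReal_integral {E : Type*} [NormedAddCommGroup E] {f : Ω → E}
    (hf : Integrable (fun ω => ‖f ω‖ ^ 2) μ) :
    ∫⁻ ω, ‖f ω‖ₑ ^ 2 ∂μ = ENNReal.ofReal (∫ ω, ‖f ω‖ ^ 2 ∂μ) := by
  rw [ofReal_integral_eq_lintegral_ofReal hf (ae_of_all _ fun ω => sq_nonneg _)]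
  simp only [ENNReal.ofReal_pow (norm_nonneg _), ofReal_norm]

lemma lintegral_enorm_sub_sq [IsProbabilityMeasure μ] {X : Ω → ℝ} (hX : MemLp X 2 μ) (c : ℝ) :
    ∫⁻ ω, ‖X ω - c‖ₑ ^ 2 ∂μ = eVar[X; μ] + ‖μ[X] - c‖ₑ ^ 2 := by
  have hXc : MemLp (fun ω => X ω - c) 2 μ := hX.sub (memLp_const c)
  have bias_variance : ∫ ω, ‖X ω - c‖ ^ 2 ∂μ = Var[X; μ] + ‖μ[X] - c‖ ^ 2 := by
    have hvar := variance_eq_sub hXc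
    rw [variance_sub_const hX.1, integral_sub (hX.integrable one_le_two) (integrable_const c)]
      at hvar
    simp_all
  rw [lintegral_enorm_sq_eq_ofReal_integral (by simpa using hXc.integrable_sq), bias_variance,
    ENNReal.ofReal_add (variance_nonneg _ _) (sq_nonneg _), ofReal_variance hX,
    ENNReal.ofReal_pow (norm_nonneg _), ofReal_norm]

lemma lintegral_prod_enorm_sub_sq [IsProbabilityMeasure μ] {X : Ω → ℝ} (hX : MemLp X 2 μ) :
    ∫⁻ p, ‖X p.1 - X p.2‖ₑ ^ 2 ∂(μ.prod μ) = 2 * eVar[X; μ] := by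
  have hmeas : AEMeasurable (fun p : Ω × Ω => ‖X p.1 - X p.2‖ₑ ^ 2) (μ.prod μ) :=
    (hX.1.comp_fst.sub hX.1.comp_snd).enorm.pow_const 2
  calc ∫⁻ p, ‖X p.1 - X p.2‖ₑ ^ 2 ∂(μ.prod μ)
      = ∫⁻ y, (eVar[X; μ] + ‖μ[X] - X y‖ₑ ^ 2) ∂μ := by
        simp only [lintegral_prod_symm _ hmeas, lintegral_enorm_sub_sq hX]
    _ = eVar[X; μ] + ∫⁻ y, ‖X y - μ[X]‖ₑ ^ 2 ∂μ := by
        rw [lintegral_add_left measurable_const]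
        simp [enorm_sub_rev]
    _ = 2 * eVar[X; μ] := (two_mul _).symm

lemma evariance_map {T : Ω → Ω'} (hT : AEMeasurable T μ) {X : Ω' → ℝ}
    (hX : AEMeasurable X (μ.map T)) : eVar[X; μ.map T] = eVar[X ∘ T; μ] := by
  rw [evariance, evariance, lintegral_map' (by fun_prop) hT,
    integral_map hT hX.aestronglyMeasurable]
  rfl

lemma memLp_two_prodMk_left_ae [SFinite μ] [SFinite ν] {F : Ω × Ω' → ℝ}
    (hF : MemLp F 2 (μ.prod ν)) : ∀ᵐ x ∂μ, MemLp (fun y => F (x, y)) 2 ν := by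
  filter_upwards [hF.integrable_sq.prod_right_ae, hF.1.prodMk_left] with x hsq hmeas
  exact (memLp_two_iff_integrable_sq hmeas).2 hsq

lemma evariance_prod_eq [IsFiniteMeasure μ] [IsProbabilityMeasure ν] {F : Ω × Ω' → ℝ}
    (hF : MemLp F 2 (μ.prod ν)) :
    eVar[F; μ.prod ν] =
      ∫⁻ x, eVar[fun y => F (x, y); ν] ∂μ + eVar[fun x => ∫ y, F (x, y) ∂ν; μ] := by
  have hmean : ∫ p, F p ∂(μ.prod ν) = ∫ x, ∫ y, F (x, y) ∂ν ∂μ :=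
    integral_prod F (hF.integrable one_le_two)
  have hF_meas : AEMeasurable F (μ.prod ν) := hF.1.aemeasurable
  have hcond_meas : AEMeasurable (fun x => ∫ y, F (x, y) ∂ν) μ :=
    hF.1.integral_prod_right'.aemeasurable
  rw [evariance, lintegral_prod _ (by fun_prop), hmean]
  conv_rhs => rw [evariance, ← lintegral_add_right' _ (by fun_prop)]
  refine lintegral_congr_ae ?_
  filter_upwards [memLp_two_prodMk_left_ae hF] with x hx using lintegral_enorm_sub_sq hx _

lemma evariance_integral_le_lintegral_evariance [SFinite μ] [IsProbabilityMeasure ν]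
    {F : Ω × Ω' → ℝ} (hF : Integrable F (μ.prod ν)) :
    eVar[fun x => ∫ y, F (x, y) ∂ν; μ] ≤ ∫⁻ y, eVar[fun x => F (x, y); μ] ∂ν := by
  set m : Ω' → ℝ := fun y => ∫ x, F (x, y) ∂μ
  have hm_int : Integrable m ν := hF.integral_prod_right
  have hmean : ∫ x, ∫ y, F (x, y) ∂ν ∂μ = ∫ y, m y ∂ν := integral_integral_swap hF
  have hD : AEMeasurable (fun p : Ω × Ω' => F p - m p.2) (μ.prod ν) :=
    (hF.1.sub hm_int.1.comp_snd).aemeasurable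
  calc eVar[fun x => ∫ y, F (x, y) ∂ν; μ]
      ≤ ∫⁻ x, ∫⁻ y, ‖F (x, y) - m y‖ₑ ^ 2 ∂ν ∂μ := by
        refine lintegral_mono_ae ?_
        filter_upwards [hF.prod_right_ae] with x hx
        rw [hmean, ← integral_sub hx hm_int]
        calc ‖∫ y, F (x, y) - m y ∂ν‖ₑ ^ 2
            ≤ (∫⁻ y, ‖F (x, y) - m y‖ₑ ∂ν) ^ 2 := by
              gcongr
              exact enorm_integral_le_lintegral_enorm _
          _ ≤ ∫⁻ y, ‖F (x, y) - m y‖ₑ ^ 2 ∂ν := by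
              simpa using sq_lintegral_le_measure_univ_mul (hx.1.sub hm_int.1).enorm
    _ = ∫⁻ y, eVar[fun x => F (x, y); μ] ∂ν := lintegral_lintegral_swap (hD.enorm.pow_const 2)

lemma evariance_prod_le [IsFiniteMeasure μ] [IsProbabilityMeasure ν] {F : Ω × Ω' → ℝ}
    (hF : MemLp F 2 (μ.prod ν)) :
    eVar[F; μ.prod ν] ≤
      ∫⁻ x, eVar[fun y => F (x, y); ν] ∂μ + ∫⁻ y, eVar[fun x => F (x, y); μ] ∂ν := by
  rw [evariance_prod_eq hF]
  gcongr
  exact evariance_integral_le_lintegral_evariance (hF.integrable one_le_two)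

end SecondMoments

section Poincare

variable {E F : Type*} [NormedAddCommGroup E] [NormedSpace ℝ E] [MeasurableSpace E]
  [NormedAddCommGroup F] [NormedSpace ℝ F] [MeasurableSpace F]

/-- The classical Poincaré inequality with constant `C`, asked of the `C¹` functions with finite
second moment and finite energy. -/
def PoincareInequality (μ : Measure E) (C : ℝ) : Prop :=
  ∀ f : E → ℝ, ContDiff ℝ 1 f → Integrable (fun x => f x ^ 2) μ →
    Integrable (fun x => ‖fderiv ℝ f x‖ ^ 2) μ →
    ∫ x, f x ^ 2 ∂μ - (∫ x, f x ∂μ) ^ 2 ≤ C * ∫ x, ‖fderiv ℝ f x‖ ^ 2 ∂μ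

/-- The Poincaré inequality with the energy density `ℓ ↦ C * ‖ℓ‖ ^ 2` replaced by an arbitrary `Q`.
It is stated in `ℝ≥0∞`, so functions of infinite energy need not be excluded. -/
def EnergyPoincareInequality (μ : Measure E) (Q : StrongDual ℝ E → ℝ≥0∞) : Prop :=
  ∀ f : E → ℝ, ContDiff ℝ 1 f → MemLp f 2 μ → eVar[f; μ] ≤ ∫⁻ x, Q (fderiv ℝ f x) ∂μ

variable {μ ν : Measure E} {C : ℝ}

lemma PoincareInequality.energyPoincareInequality [OpensMeasurableSpace E]
    [IsProbabilityMeasure μ] (hμ : PoincareInequality μ C) (hC : 0 < C) :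
    EnergyPoincareInequality μ (fun ℓ => ENNReal.ofReal C * ‖ℓ‖ₑ ^ 2) := by
  intro f hf hf2
  have hdf : Continuous (fderiv ℝ f) := hf.continuous_fderiv one_ne_zero
  have hdf_meas : Measurable fun x => ‖fderiv ℝ f x‖ₑ ^ 2 := by fun_prop
  rw [lintegral_const_mul _ hdf_meas]
  by_cases hint : Integrable (fun x => ‖fderiv ℝ f x‖ ^ 2) μ
  · rw [lintegral_enorm_sq_eq_ofReal_integral hint, ← ENNReal.ofReal_mul hC.le,
      ← ofReal_variance hf2, variance_eq_sub hf2]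
    exact ENNReal.ofReal_le_ofReal (hμ f hf hf2.integrable_sq hint)
  · have energy_eq_top : ∫⁻ x, ‖fderiv ℝ f x‖ₑ ^ 2 ∂μ = ⊤ := by
      by_contra hfin
      refine hint ⟨(hdf.norm.pow 2).measurable.aestronglyMeasurable, ?_⟩
      simpa [HasFiniteIntegral, enorm_pow, lt_top_iff_ne_top] using hfin
    simp [energy_eq_top, ENNReal.mul_top, hC]

lemma EnergyPoincareInequality.poincareInequality [OpensMeasurableSpace E]
    [IsProbabilityMeasure μ]
    (hμ : EnergyPoincareInequality μ (fun ℓ => ENNReal.ofReal C * ‖ℓ‖ₑ ^ 2)) (hC : 0 ≤ C) :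
    PoincareInequality μ C := by
  intro f hf hfsq hint
  have hf2 : MemLp f 2 μ :=
    (memLp_two_iff_integrable_sq hf.continuous.measurable.aestronglyMeasurable).2 hfsq
  have hmain := hμ f hf hf2
  rw [lintegral_const_mul' _ _ ENNReal.ofReal_ne_top, lintegral_enorm_sq_eq_ofReal_integral hint,
    ← ENNReal.ofReal_mul hC, ← ofReal_variance hf2,
    ENNReal.ofReal_le_ofReal_iff (by positivity)] at hmain
  simpa [variance_eq_sub hf2] using hmain

lemma energyPoincareInequality_dirac [MeasurableSingletonClass E] (a : E)
    (Q : StrongDual ℝ E → ℝ≥0∞) :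
    EnergyPoincareInequality (Measure.dirac a) Q :=
  fun f _ _ => by simp [evariance]

namespace EnergyPoincareInequality

variable {Q Q₁ Q₂ : StrongDual ℝ E → ℝ≥0∞}

lemma map_continuousLinearMap [OpensMeasurableSpace E] [BorelSpace F]
    (hμ : EnergyPoincareInequality μ Q) (L : E →L[ℝ] F) {R : StrongDual ℝ F → ℝ≥0∞}
    (hR : Measurable R) (hQR : ∀ ℓ, Q (ℓ ∘L L) ≤ R ℓ) :
    EnergyPoincareInequality (μ.map L) R := by
  intro f hf hf2
  have hL : Measurable L := L.continuous.measurable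
  have hRdf : Measurable fun x => R (fderiv ℝ f x) :=
    hR.comp (hf.continuous_fderiv one_ne_zero).measurable
  have chain_rule (x : E) : fderiv ℝ (f ∘ L) x = fderiv ℝ f (L x) ∘L L := by
    rw [fderiv_comp x (hf.differentiable one_ne_zero _) L.differentiableAt, L.fderiv]
  rw [evariance_map hL.aemeasurable hf.continuous.measurable.aemeasurable,
    lintegral_map hRdf hL]
  calc eVar[f ∘ L; μ]
      ≤ ∫⁻ x, Q (fderiv ℝ (f ∘ L) x) ∂μ :=
        hμ _ (hf.comp L.contDiff) (hf2.comp_of_map hL.aemeasurable)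
    _ ≤ ∫⁻ x, R (fderiv ℝ f (L x)) ∂μ := by
        simp only [chain_rule]
        exact lintegral_mono fun x => hQR _

lemma evariance_comp_const_add_le (hμ : EnergyPoincareInequality μ Q) {f : E → ℝ}
    (hf : ContDiff ℝ 1 f) {a : E} (hf2 : MemLp (fun x => f (a + x)) 2 μ) :
    eVar[fun x => f (a + x); μ] ≤ ∫⁻ x, Q (fderiv ℝ f (a + x)) ∂μ := by
  simpa only [fderiv_comp_add_left] using
    hμ (fun x => f (a + x)) (hf.comp (contDiff_const.add contDiff_id)) hf2

lemma conv [BorelSpace E] [SecondCountableTopology E] [IsProbabilityMeasure μ]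
    [IsProbabilityMeasure ν] (hμ : EnergyPoincareInequality μ Q₁)
    (hν : EnergyPoincareInequality ν Q₂) (hQ₁ : Measurable Q₁) (hQ₂ : Measurable Q₂) :
    EnergyPoincareInequality (μ ∗ ν) (Q₁ + Q₂) := by
  intro f hf hf2
  have hadd : Measurable fun p : E × E => p.1 + p.2 := measurable_add
  have hdf : Measurable (fderiv ℝ f) := (hf.continuous_fderiv one_ne_zero).measurable
  have hQ₁f : Measurable fun z => Q₁ (fderiv ℝ f z) := hQ₁.comp hdf
  have hQ₂f : Measurable fun z => Q₂ (fderiv ℝ f z) := hQ₂.comp hdf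
  have hF : MemLp (fun p : E × E => f (p.1 + p.2)) 2 (μ.prod ν) :=
    hf2.comp_of_map hadd.aemeasurable
  have hF_swap : MemLp (fun p : E × E => f (p.1 + p.2)) 2 (ν.prod μ) := by
    simpa [Function.comp_def, add_comm] using
      hF.comp_measurePreserving Measure.measurePreserving_swap
  have freeze_left : ∀ᵐ x ∂μ, eVar[fun y => f (x + y); ν] ≤ ∫⁻ y, Q₂ (fderiv ℝ f (x + y)) ∂ν := by
    filter_upwards [memLp_two_prodMk_left_ae hF] with x hx
      using hν.evariance_comp_const_add_le hf hx
  have freeze_right : ∀ᵐ y ∂ν, eVar[fun x => f (x + y); μ] ≤ ∫⁻ x, Q₁ (fderiv ℝ f (y + x)) ∂μ := by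
    filter_upwards [memLp_two_prodMk_left_ae hF_swap] with y hy
    simpa only [add_comm] using hμ.evariance_comp_const_add_le hf hy
  calc eVar[f; μ ∗ ν]
      = eVar[fun p : E × E => f (p.1 + p.2); μ.prod ν] :=
        evariance_map hadd.aemeasurable hf.continuous.measurable.aemeasurable
    _ ≤ ∫⁻ x, eVar[fun y => f (x + y); ν] ∂μ + ∫⁻ y, eVar[fun x => f (x + y); μ] ∂ν :=
        evariance_prod_le hF
    _ ≤ ∫⁻ x, ∫⁻ y, Q₂ (fderiv ℝ f (x + y)) ∂ν ∂μ + ∫⁻ y, ∫⁻ x, Q₁ (fderiv ℝ f (y + x)) ∂μ ∂ν :=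
        add_le_add (lintegral_mono_ae freeze_left) (lintegral_mono_ae freeze_right)
    _ = ∫⁻ z, Q₂ (fderiv ℝ f z) ∂(μ ∗ ν) + ∫⁻ z, Q₁ (fderiv ℝ f z) ∂(μ ∗ ν) := by
        rw [Measure.lintegral_conv hQ₂f, Measure.conv_comm, Measure.lintegral_conv hQ₁f]
    _ = ∫⁻ z, (Q₁ + Q₂) (fderiv ℝ f z) ∂(μ ∗ ν) := by
        rw [add_comm, ← lintegral_add_left hQ₁f]
        rfl

lemma map_sum [BorelSpace E] [SecondCountableTopology E] {Ω ι : Type*} [MeasurableSpace Ω]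
    {P : Measure Ω} [IsProbabilityMeasure P] {X : ι → Ω → E} {R : ι → StrongDual ℝ E → ℝ≥0∞}
    (hX : ∀ i, EnergyPoincareInequality (P.map (X i)) (R i)) (hindep : iIndepFun X P)
    (hX_meas : ∀ i, AEMeasurable (X i) P) (hR : ∀ i, Measurable (R i)) (s : Finset ι) :
    EnergyPoincareInequality (P.map (∑ i ∈ s, X i)) (∑ i ∈ s, R i) := by
  classical
  induction s using Finset.induction_on with
  | empty =>
    rw [Finset.sum_empty, show (0 : Ω → E) = fun _ => 0 from rfl, Measure.map_const, measure_univ,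
      one_smul]
    exact energyPoincareInequality_dirac _ _
  | insert i s hi ih =>
    have hs_meas : AEMeasurable (∑ j ∈ s, X j) P := s.aemeasurable_sum fun j _ => hX_meas j
    have := Measure.isProbabilityMeasure_map (hX_meas i)
    have := Measure.isProbabilityMeasure_map hs_meas
    rw [Finset.sum_insert hi, Finset.sum_insert hi,
      (hindep.indepFun_finsetSum_of_notMem₀ hX_meas hi).symm.map_add_eq_map_conv_map₀
        (hX_meas i) hs_meas]
    exact (hX i).conv ih (hR i) (by fun_prop)

lemma map_const_smul [BorelSpace E] {K : ℝ≥0∞}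
    (hμ : EnergyPoincareInequality μ fun ℓ => K * ‖ℓ‖ₑ ^ 2) (a : ℝ) :
    EnergyPoincareInequality (μ.map (a • ·)) fun ℓ => ‖a‖ₑ ^ 2 * K * ‖ℓ‖ₑ ^ 2 := by
  refine hμ.map_continuousLinearMap (a • ContinuousLinearMap.id ℝ E) (by fun_prop) fun ℓ => ?_
  rw [ContinuousLinearMap.comp_smul, ContinuousLinearMap.comp_id, enorm_smul]
  exact le_of_eq (by ring)

end EnergyPoincareInequality

end Poincare

section RealLine

variable {μ : Measure ℝ} {f : ℝ → ℝ} {m : ℝ} {v : ℝ≥0}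

/-- The kernel `(x - y) 1{y < s ≤ x}`: the length of the interval from `y` to `x`, counted only if
it crosses the level `s` upwards. -/
def crossingLength (p : ℝ × ℝ) (s : ℝ) : ℝ≥0∞ :=
  (Ici s ×ˢ Iio s).indicator (fun q => ENNReal.ofReal (q.1 - q.2)) p

lemma measurable_crossingLength : Measurable (Function.uncurry crossingLength) := by
  have hset : MeasurableSet {q : (ℝ × ℝ) × ℝ | q.2 ≤ q.1.1 ∧ q.1.2 < q.2} :=
    (measurableSet_le measurable_snd (measurable_fst.comp measurable_fst)).inter
      (measurableSet_lt (measurable_snd.comp measurable_fst) measurable_snd)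
  exact Measurable.indicator (f := fun q : (ℝ × ℝ) × ℝ => ENNReal.ofReal (q.1.1 - q.1.2))
    (by fun_prop) hset

lemma enorm_sub_sq_le_of_le (hf : ContDiff ℝ 1 f) {p : ℝ × ℝ} (hp : p.2 ≤ p.1) :
    ‖f p.1 - f p.2‖ₑ ^ 2 ≤ ∫⁻ s, crossingLength p s * ‖deriv f s‖ₑ ^ 2 := by
  have hdf : Measurable (deriv f) := hf.continuous_deriv_one.measurable
  obtain ⟨x, y⟩ := p
  calc ‖f x - f y‖ₑ ^ 2
      ≤ (∫⁻ s in Ioc y x, ‖deriv f s‖ₑ) ^ 2 := by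
        rw [restrict_Ioc_eq_restrict_Icc]
        gcongr
        exact enorm_sub_le_lintegral_deriv_of_contDiffOn_Icc hf.contDiffOn hp
    _ ≤ ENNReal.ofReal (x - y) * ∫⁻ s in Ioc y x, ‖deriv f s‖ₑ ^ 2 := by
        simpa using sq_lintegral_le_measure_univ_mul (μ := volume.restrict (Ioc y x))
          hdf.enorm.aemeasurable
    _ = ∫⁻ s, crossingLength (x, y) s * ‖deriv f s‖ₑ ^ 2 := by
        rw [← lintegral_const_mul _ (by fun_prop), ← lintegral_indicator measurableSet_Ioc]
        refine lintegral_congr fun s => ?_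
        by_cases hs : s ∈ Ioc y x <;> simp_all [crossingLength, indicator, and_comm]

lemma enorm_sub_sq_le (hf : ContDiff ℝ 1 f) (p : ℝ × ℝ) :
    ‖f p.1 - f p.2‖ₑ ^ 2 ≤ (∫⁻ s, crossingLength p s * ‖deriv f s‖ₑ ^ 2) +
      ∫⁻ s, crossingLength p.swap s * ‖deriv f s‖ₑ ^ 2 := by
  rcases le_total p.2 p.1 with h | h
  · exact (enorm_sub_sq_le_of_le hf h).trans le_self_add
  · rw [enorm_sub_rev]
    exact (enorm_sub_sq_le_of_le hf (p := p.swap) h).trans le_add_self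

lemma lintegral_crossingLength [IsProbabilityMeasure μ] (hμ : Integrable (fun x : ℝ => x) μ)
    (s : ℝ) :
    ∫⁻ p, crossingLength p s ∂(μ.prod μ) = ENNReal.ofReal (∫ x in Ici s, (x - ∫ y, y ∂μ) ∂μ) := by
  have hIci : Integrable (fun x : ℝ => x) (μ.restrict (Ici s)) := hμ.restrict
  have hIio : Integrable (fun x : ℝ => x) (μ.restrict (Iio s)) := hμ.restrict
  have hdiff : Integrable (fun p : ℝ × ℝ => p.1 - p.2)
      ((μ.restrict (Ici s)).prod (μ.restrict (Iio s))) :=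
    (hIci.comp_fst _).sub (hIio.comp_snd _)
  have hmean : ∫ x in Ici s, x ∂μ + ∫ x in Iio s, x ∂μ = ∫ x, x ∂μ := by
    simpa using integral_add_compl measurableSet_Ici hμ
  have hmass : μ.real (Ici s) + μ.real (Iio s) = 1 := by
    simpa using measureReal_add_measureReal_compl (μ := μ) (measurableSet_Ici (a := s))
  have hset : MeasurableSet (Ici s ×ˢ Iio s) := measurableSet_Ici.prod measurableSet_Iio
  calc ∫⁻ p, crossingLength p s ∂(μ.prod μ)
      = ∫⁻ p in Ici s ×ˢ Iio s, ENNReal.ofReal (p.1 - p.2) ∂(μ.prod μ) :=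
        lintegral_indicator hset _
    _ = ENNReal.ofReal (∫ p in Ici s ×ˢ Iio s, (p.1 - p.2) ∂(μ.prod μ)) := by
        rw [← Measure.prod_restrict]
        refine (ofReal_integral_eq_lintegral_ofReal hdiff ?_).symm
        rw [Measure.prod_restrict]
        filter_upwards [ae_restrict_mem hset] with p hp
        exact sub_nonneg.2 (hp.2.le.trans hp.1)
    _ = ENNReal.ofReal
          (μ.real (Iio s) * ∫ x in Ici s, x ∂μ - μ.real (Ici s) * ∫ x in Iio s, x ∂μ) := by
        rw [← Measure.prod_restrict, integral_sub (hIci.comp_fst _) (hIio.comp_snd _),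
          integral_fun_fst (fun x : ℝ => x), integral_fun_snd (fun x : ℝ => x)]
        simp
    _ = ENNReal.ofReal (∫ x in Ici s, (x - ∫ y, y ∂μ) ∂μ) := by
        rw [integral_sub hIci (integrable_const _), setIntegral_const]
        congr 1
        simp only [smul_eq_mul]
        linear_combination (-μ.real (Ici s)) * hmean + (∫ x in Ici s, x ∂μ) * hmass

lemma evariance_le_lintegral_deriv [IsProbabilityMeasure μ] (hμ : Integrable (fun x : ℝ => x) μ)
    (hf : ContDiff ℝ 1 f) (hf2 : MemLp f 2 μ) :
    eVar[f; μ] ≤ ∫⁻ s, ENNReal.ofReal (∫ x in Ici s, (x - ∫ y, y ∂μ) ∂μ) * ‖deriv f s‖ₑ ^ 2 := by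
  have hdf : Measurable fun s => ‖deriv f s‖ₑ ^ 2 := by
    have := hf.continuous_deriv_one
    fun_prop
  have hK : Measurable fun q : (ℝ × ℝ) × ℝ => crossingLength q.1 q.2 * ‖deriv f q.2‖ₑ ^ 2 :=
    measurable_crossingLength.mul (hdf.comp measurable_snd)
  set G : ℝ × ℝ → ℝ≥0∞ := fun p => ∫⁻ s, crossingLength p s * ‖deriv f s‖ₑ ^ 2 with hG
  have hG_meas : Measurable G := hK.lintegral_prod_right'
  have hG_lintegral : ∫⁻ p, G p ∂(μ.prod μ) =
      ∫⁻ s, ENNReal.ofReal (∫ x in Ici s, (x - ∫ y, y ∂μ) ∂μ) * ‖deriv f s‖ₑ ^ 2 := by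
    rw [hG, lintegral_lintegral_swap hK.aemeasurable]
    refine lintegral_congr fun s => ?_
    have hs : Measurable fun p => crossingLength p s :=
      measurable_crossingLength.comp measurable_prodMk_right
    rw [lintegral_mul_const _ hs, lintegral_crossingLength hμ]
  have hdouble : 2 * eVar[f; μ] ≤ 2 * ∫⁻ p, G p ∂(μ.prod μ) := by
    calc 2 * eVar[f; μ]
        = ∫⁻ p, ‖f p.1 - f p.2‖ₑ ^ 2 ∂(μ.prod μ) := (lintegral_prod_enorm_sub_sq hf2).symm
      _ ≤ ∫⁻ p, (G p + G p.swap) ∂(μ.prod μ) := lintegral_mono fun p => enorm_sub_sq_le hf p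
      _ = 2 * ∫⁻ p, G p ∂(μ.prod μ) := by
        rw [lintegral_add_left hG_meas, lintegral_prod_swap, two_mul]
  rw [← hG_lintegral]
  exact (ENNReal.mul_le_mul_iff_right two_ne_zero ENNReal.ofNat_ne_top).1 hdouble

lemma hasDerivAt_gaussianPDFReal (hv : v ≠ 0) (x : ℝ) :
    HasDerivAt (gaussianPDFReal m v) (-(gaussianPDFReal m v x * (x - m) / v)) x := by
  have hv' : (v : ℝ) ≠ 0 := by exact_mod_cast hv
  rw [gaussianPDFReal_def]
  have hexponent : HasDerivAt (fun x : ℝ => -(x - m) ^ 2 / (2 * v)) (-((x - m) / v)) x := by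
    convert! ((((hasDerivAt_id x).sub_const m).pow 2).neg.div_const (2 * v : ℝ)) using 1
    simp
    field_simp
  convert! hexponent.exp.const_mul (√(2 * π * v))⁻¹ using 1
  ring

lemma tendsto_gaussianPDFReal_atTop (hv : v ≠ 0) :
    Filter.Tendsto (gaussianPDFReal m v) Filter.atTop (nhds 0) := by
  have hexponent : Filter.Tendsto (fun x : ℝ => (x - m) ^ 2 / (2 * v)) Filter.atTop Filter.atTop :=
    ((Filter.tendsto_pow_atTop two_ne_zero).comp
      (Filter.tendsto_atTop_add_const_right _ (-m) Filter.tendsto_id)).atTop_div_const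
        (by positivity)
  simpa [gaussianPDFReal_def, Function.comp_def, neg_div] using
    (tendsto_exp_neg_atTop_nhds_zero.comp hexponent).const_mul (√(2 * π * v))⁻¹

lemma setIntegral_Ici_sub_mean_gaussianReal (hv : v ≠ 0) (s : ℝ) :
    ∫ x in Ici s, (x - m) ∂(gaussianReal m v) = v * gaussianPDFReal m v s := by
  have hint : Integrable (fun x => gaussianPDFReal m v x * (x - m)) := by
    have : Integrable (fun x => x - m) (gaussianReal m v) :=
      IsGaussian.integrable_id.sub (integrable_const m)
    rw [gaussianReal_of_var_ne_zero m hv, integrable_withDensity_iff_integrable_smul₀'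
      (by fun_prop) (ae_of_all _ fun x => gaussianPDF_lt_top)] at this
    simpa using this
  have hftc := integral_Ioi_of_hasDerivAt_of_tendsto'
    (fun x (_ : x ∈ Ici s) => hasDerivAt_gaussianPDFReal (m := m) hv x)
    (hint.div_const v).neg.integrableOn (tendsto_gaussianPDFReal_atTop hv)
  rw [integral_neg, integral_div, zero_sub, neg_inj] at hftc
  rw [gaussianReal_of_var_ne_zero m hv, setIntegral_withDensity_eq_setIntegral_toReal_smul
    (by fun_prop) (ae_of_all _ fun x => gaussianPDF_lt_top) _ measurableSet_Ici,
    integral_Ici_eq_integral_Ioi]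
  simp only [toReal_gaussianPDF, smul_eq_mul]
  field_simp at hftc ⊢
  linarith

lemma energyPoincareInequality_gaussianReal (m : ℝ) (v : ℝ≥0) :
    EnergyPoincareInequality (gaussianReal m v) fun ℓ => v * ‖ℓ 1‖ₑ ^ 2 := by
  rcases eq_or_ne v 0 with rfl | hv
  · simpa using energyPoincareInequality_dirac m _
  intro f hf hf2
  have hdf : Measurable fun s => (v : ℝ≥0∞) * ‖deriv f s‖ₑ ^ 2 := by
    have := hf.continuous_deriv_one
    fun_prop
  have hkernel (s : ℝ) : ENNReal.ofReal (v * gaussianPDFReal m v s) = gaussianPDF m v s * v := by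
    rw [mul_comm, ENNReal.ofReal_mul (gaussianPDFReal_nonneg _ _ _), ENNReal.ofReal_coe_nnreal,
      gaussianPDF_def]
  calc eVar[f; gaussianReal m v]
      ≤ ∫⁻ s, ENNReal.ofReal (v * gaussianPDFReal m v s) * ‖deriv f s‖ₑ ^ 2 := by
        simpa [setIntegral_Ici_sub_mean_gaussianReal hv] using
          evariance_le_lintegral_deriv IsGaussian.integrable_id hf hf2
    _ = ∫⁻ s, v * ‖fderiv ℝ f s 1‖ₑ ^ 2 ∂(gaussianReal m v) := by
        rw [gaussianReal_of_var_ne_zero m hv,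
          lintegral_withDensity_eq_lintegral_mul _ (by fun_prop) (by simpa using hdf)]
        simp [hkernel, mul_assoc]

end RealLine

section StdGaussian

variable {E : Type*} [NormedAddCommGroup E] [InnerProductSpace ℝ E]

lemma sum_enorm_orthonormalBasis_sq {ι : Type*} [Fintype ι] (b : OrthonormalBasis ι ℝ E)
    (ℓ : StrongDual ℝ E) : ∑ i, ‖ℓ (b i)‖ₑ ^ 2 = ‖ℓ‖ₑ ^ 2 := by
  simp only [← ofReal_norm, ← ENNReal.ofReal_pow (norm_nonneg _)]
  rw [b.norm_dual, ENNReal.ofReal_sum_of_nonneg fun _ _ => sq_nonneg _]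
  simp

variable [FiniteDimensional ℝ E] [MeasurableSpace E] [BorelSpace E]

lemma energyPoincareInequality_stdGaussian :
    EnergyPoincareInequality (stdGaussian E) fun ℓ => ‖ℓ‖ₑ ^ 2 := by
  set b := stdOrthonormalBasis ℝ E
  set P : Measure (Fin (finrank ℝ E) → ℝ) := Measure.pi fun _ => gaussianReal 0 1
  let L (i : Fin (finrank ℝ E)) : ℝ →L[ℝ] E := ContinuousLinearMap.toSpanSingleton ℝ (b i)
  have hindep : iIndepFun (fun i (x : Fin (finrank ℝ E) → ℝ) => L i (x i)) P :=
    iIndepFun_pi fun i => (L i).measurable.aemeasurable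
  have hcoord (i : Fin (finrank ℝ E)) :
      EnergyPoincareInequality (P.map fun x => L i (x i)) fun ℓ => ‖ℓ (b i)‖ₑ ^ 2 := by
    have hmap : P.map (fun x => L i (x i)) = (gaussianReal 0 1).map (L i) := by
      rw [← (measurePreserving_eval (fun _ => gaussianReal 0 1) i).map_eq,
        Measure.map_map (by fun_prop) (by fun_prop)]
      rfl
    rw [hmap]
    exact (energyPoincareInequality_gaussianReal 0 1).map_continuousLinearMap _ (by fun_prop)
      (by simp [L])
  have hsum := EnergyPoincareInequality.map_sum hcoord hindep
    (fun i => ((L i).measurable.comp (measurable_pi_apply i)).aemeasurable)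
    (fun i => by fun_prop) Finset.univ
  simpa only [stdGaussian, L, Finset.sum_fn, ContinuousLinearMap.toSpanSingleton_apply,
    sum_enorm_orthonormalBasis_sq] using hsum

lemma integrable_exp_neg_norm_sq_div_two : Integrable fun z : E => exp (-‖z‖ ^ 2 / 2) := by
  have h := (GaussianFourier.integrable_cexp_neg_mul_sq_norm_add (V := E) (b := 1 / 2)
    (by norm_num) 0 0).norm
  refine h.congr (ae_of_all _ fun z => ?_)
  have hexponent : -(1 / 2 : ℂ) * ‖z‖ ^ 2 = (-‖z‖ ^ 2 / 2 : ℝ) := by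
    push_cast
    ring
  simp only [zero_mul, add_zero, hexponent, Complex.norm_exp_ofReal]

lemma integral_exp_neg_norm_sq_div_two_mul_cexp_inner (t : E) :
    ∫ z : E, (exp (-‖z‖ ^ 2 / 2) : ℂ) * Complex.exp (inner ℝ z t * Complex.I) =
      ((2 * π) ^ ((finrank ℝ E : ℝ) / 2) : ℝ) * Complex.exp (-‖t‖ ^ 2 / 2) := by
  have hfourier := GaussianFourier.integral_cexp_neg_mul_sq_norm_add (V := E) (b := 1 / 2)
    (by norm_num) Complex.I t
  have hbase : (π / (1 / 2) : ℂ) = (2 * π : ℝ) := by push_cast; ring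
  have hpow : (finrank ℝ E / 2 : ℂ) = ((finrank ℝ E : ℝ) / 2 : ℝ) := by push_cast; rfl
  rw [hbase, hpow, ← Complex.ofReal_cpow (by positivity), Complex.I_sq] at hfourier
  convert hfourier using 1
  · refine integral_congr_ae (ae_of_all _ fun z => ?_)
    simp only [Complex.ofReal_exp, ← Complex.exp_add, real_inner_comm]
    push_cast
    ring_nf
  · ring_nf

lemma stdGaussian_eq_withDensity :
    stdGaussian E = volume.withDensity fun z =>
      ENNReal.ofReal ((2 * π) ^ (-(finrank ℝ E : ℝ) / 2) * exp (-‖z‖ ^ 2 / 2)) := by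
  have := FiniteDimensional.complete ℝ E
  have := isFiniteMeasure_withDensity_ofReal
    ((integrable_exp_neg_norm_sq_div_two (E := E)).const_mul
      ((2 * π) ^ (-(finrank ℝ E : ℝ) / 2))).2
  have hnormalization :
      (2 * π) ^ (-(finrank ℝ E : ℝ) / 2) * (2 * π) ^ ((finrank ℝ E : ℝ) / 2) = 1 := by
    rw [← rpow_add (by positivity), neg_div, neg_add_cancel, rpow_zero]
  refine Measure.ext_of_charFun (funext fun t => ?_)
  rw [charFun_stdGaussian, charFun_apply, integral_withDensity_eq_integral_toReal_smul
    (by fun_prop) (ae_of_all _ fun _ => ENNReal.ofReal_lt_top)]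
  have hdensity_nonneg (z : E) : 0 ≤ (2 * π) ^ (-(finrank ℝ E : ℝ) / 2) * exp (-‖z‖ ^ 2 / 2) := by
    positivity
  simp only [ENNReal.toReal_ofReal (hdensity_nonneg _), Complex.real_smul,
    Complex.ofReal_mul, mul_assoc]
  rw [integral_const_mul, integral_exp_neg_norm_sq_div_two_mul_cexp_inner, ← mul_assoc,
    ← Complex.ofReal_mul, hnormalization, Complex.ofReal_one, one_mul]

end StdGaussian

section Interpolation

variable {E : Type*} [NormedAddCommGroup E] [InnerProductSpace ℝ E]

lemma norm_gradient [CompleteSpace E] (f : E → ℝ) (x : E) : ‖gradient f x‖ = ‖fderiv ℝ f x‖ :=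
  LinearIsometryEquiv.norm_map _ _

variable [FiniteDimensional ℝ E] [MeasurableSpace E] [BorelSpace E]

theorem poincare_along_gaussian_interpolation_general {ν : Measure E} [IsProbabilityMeasure ν]
    {C : ℝ} (hC : 0 < C) (hν : PoincareInequality ν C) (α β : ℝ) :
    PoincareInequality (((stdGaussian E).prod ν).map fun q => α • q.1 + β • q.2)
      (α ^ 2 + β ^ 2 * C) := by
  have := Measure.isProbabilityMeasure_map (μ := stdGaussian E) (f := fun z => α • z) (by fun_prop)
  have := Measure.isProbabilityMeasure_map (μ := ν) (f := fun x => β • x) (by fun_prop)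
  have hlaw : ((stdGaussian E).prod ν).map (fun q => α • q.1 + β • q.2) =
      (stdGaussian E).map (α • ·) ∗ ν.map (β • ·) := by
    rw [Measure.conv, Measure.map_prod_map _ _ (by fun_prop) (by fun_prop),
      Measure.map_map (by fun_prop) (by fun_prop)]
    rfl
  have hγ : EnergyPoincareInequality (stdGaussian E) fun ℓ => 1 * ‖ℓ‖ₑ ^ 2 := by
    simpa using energyPoincareInequality_stdGaussian
  rw [hlaw]
  refine EnergyPoincareInequality.poincareInequality ?_ (by positivity)
  convert (hγ.map_const_smul α).conv ((hν.energyPoincareInequality hC).map_const_smul β)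
    (by fun_prop) (by fun_prop) using 1
  funext ℓ
  simp only [Pi.add_apply, ← add_mul, mul_one]
  rw [ENNReal.ofReal_add (by positivity) (by positivity), ENNReal.ofReal_mul (by positivity)]
  simp [← enorm_pow, Real.enorm_of_nonneg, sq_nonneg]

/-- **Poincaré inequality along the Gaussian interpolation.** If `ν` satisfies a
Poincaré inequality with constant `C > 0`, then `μ = Law(α Z + β X₁)` (with
`Z ~ N(0, I_d)` independent of `X₁ ~ ν`) satisfies a Poincaré inequality with
constant `α² + β² C`. -/
theorem poincare_along_gaussian_interpolation
    (d : ℕ)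
    (ν : Measure (EuclideanSpace ℝ (Fin d))) [IsProbabilityMeasure ν]
    (C : ℝ) (hC : 0 < C)
    -- ν satisfies the Poincaré inequality with constant C
    (hPI : ∀ g : EuclideanSpace ℝ (Fin d) → ℝ, ContDiff ℝ 1 g →
      Integrable (fun x => (g x) ^ 2) ν →
      Integrable (fun x => ‖gradient g x‖ ^ 2) ν →
      (∫ x, (g x) ^ 2 ∂ν) - (∫ x, g x ∂ν) ^ 2
        ≤ C * ∫ x, ‖gradient g x‖ ^ 2 ∂ν)
    (α β : ℝ) (hα : 0 ≤ α) (hβ : 0 ≤ β)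
    -- the standard Gaussian measure γ_d
    (γ : Measure (EuclideanSpace ℝ (Fin d)))
    (hγ : γ = volume.withDensity (fun z =>
      ENNReal.ofReal ((2 * π) ^ (-(d:ℝ)/2) * exp (-‖z‖ ^ 2 / 2))))
    -- μ = Law(α Z + β X₁)
    (μ : Measure (EuclideanSpace ℝ (Fin d)))
    (hμ : μ = Measure.map (fun q : EuclideanSpace ℝ (Fin d) × EuclideanSpace ℝ (Fin d) =>
      α • q.1 + β • q.2) (γ.prod ν)) :
    ∀ f : EuclideanSpace ℝ (Fin d) → ℝ, ContDiff ℝ 1 f →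
      Integrable (fun x => (f x) ^ 2) μ →
      Integrable (fun x => ‖gradient f x‖ ^ 2) μ →
      (∫ x, (f x) ^ 2 ∂μ) - (∫ x, f x ∂μ) ^ 2
        ≤ (α ^ 2 + β ^ 2 * C) * ∫ x, ‖gradient f x‖ ^ 2 ∂μ := by
  have hn : (finrank ℝ (EuclideanSpace ℝ (Fin d)) : ℝ) = d := by simp
  rw [hμ, hγ, ← hn, ← stdGaussian_eq_withDensity]
  simp only [norm_gradient] at hPI ⊢
  exact poincare_along_gaussian_interpolation_general hC hPI α β

end Interpolation
end
end
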